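/- arXiv:2007.02814 — 4 statements merged into one kernel-verified Lean document; each statement's English description precedes it below -/
import Mathlib

section
/- For every real δ ≥ 1, setting γ_δ = ((σ_m^{−1}−1)+ρ_n^{−1}δ)/(σ_m^{−1}+(ρ_n^{−1}−1)δ), one has: if ψ̲_1(Λ*(Θ), μ*(δ)) ≤ 1 − δ then ψ̲_1(Λ(Θ), μ(γ_δ)) ≤ 1 − γ_δ. -/
open Filter

noncomputable section

/-- The weighted norm `|x|_w = max_j |x_j|^(1/w_j)`. -/
def wnorm {k : ℕ} (w : Fin k → ℝ) (x : Fin k → ℝ) : ℝ := ⨆ j, |x j| ^ ((1 : ℝ) / w j)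

/-- The lattice `Λ(Θ) = {(x, y − Θx) : x ∈ ℤ^m, y ∈ ℤ^n} ⊂ ℝ^(m+n)`. -/
def latt (m n : ℕ) (Θ : Matrix (Fin n) (Fin m) ℝ) : Set (Fin (m + n) → ℝ) :=
  {v | ∃ (x : Fin m → ℤ) (y : Fin n → ℤ),
    v = Fin.append (fun j => (x j : ℝ))
      (fun i => (y i : ℝ) - Θ.mulVec (fun j => (x j : ℝ)) i)}

/-- The dual lattice `Λ*(Θ) = {(x + ᵀΘy, y) : x ∈ ℤ^m, y ∈ ℤ^n} ⊂ ℝ^(m+n)`. -/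
def lattDual (m n : ℕ) (Θ : Matrix (Fin n) (Fin m) ℝ) : Set (Fin (m + n) → ℝ) :=
  {v | ∃ (x : Fin m → ℤ) (y : Fin n → ℤ),
    v = Fin.append (fun j => (x j : ℝ) + Θ.transpose.mulVec (fun i => (y i : ℝ)) j)
      (fun i => (y i : ℝ))}

/-- `e₁ = (1−dσ₁, …, 1−dσ_m, 1, …, 1)` with `n` trailing ones, `d = m + n`. -/
def eOne (m n : ℕ) (σ : Fin m → ℝ) : Fin (m + n) → ℝ :=
  Fin.append (fun j => 1 - ((m + n : ℕ) : ℝ) * σ j) (fun _ => 1)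

/-- `e₂ = (1, …, 1, 1−dρ_n, …, 1−dρ₁)` with `m` leading ones, `d = m + n`. -/
def eTwo (m n : ℕ) (ρ : Fin n → ℝ) : Fin (m + n) → ℝ :=
  Fin.append (fun _ => (1 : ℝ)) (fun i => 1 - ((m + n : ℕ) : ℝ) * ρ i.rev)

/-- `μ(γ) = −e₁ + γ e₂`. -/
def muGamma (m n : ℕ) (σ : Fin m → ℝ) (ρ : Fin n → ℝ) (γ : ℝ) : Fin (m + n) → ℝ :=
  -eOne m n σ + γ • eTwo m n ρ

/-- `μ*(δ) = δ e₁ − e₂`. -/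
def muStar (m n : ℕ) (σ : Fin m → ℝ) (ρ : Fin n → ℝ) (δ : ℝ) : Fin (m + n) → ℝ :=
  δ • eOne m n σ - eTwo m n ρ

/-- The `k`-th successive minimum `λ_k(B_τ, Λ)` of the box
`B_τ = {z : |z_i| ≤ exp (τ i)}` with respect to the lattice `Λ`. -/
def succMin (d : ℕ) (Λ : Set (Fin d → ℝ)) (τ : Fin d → ℝ) (k : ℕ) : ℝ :=
  sInf {lam : ℝ | 0 < lam ∧ ∃ v : Fin k → (Fin d → ℝ),
    (∀ l, v l ∈ Λ) ∧ LinearIndependent ℝ v ∧ ∀ l i, |v l i| ≤ lam * Real.exp (τ i)}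

/-- `L_k(Λ, τ) = log λ_k(B_τ, Λ)`. -/
def Lk (d : ℕ) (Λ : Set (Fin d → ℝ)) (τ : Fin d → ℝ) (k : ℕ) : ℝ :=
  Real.log (succMin d Λ τ k)

/-- `S_k(Λ, τ) = L_1(Λ, τ) + ⋯ + L_k(Λ, τ)`. -/
def Sk (d : ℕ) (Λ : Set (Fin d → ℝ)) (τ : Fin d → ℝ) (k : ℕ) : ℝ :=
  ∑ j ∈ Finset.Icc 1 k, Lk d Λ τ j

/-- Schmidt–Summerer lower exponent of the first type:
`ψ̲_k(Λ, μ) = liminf_{s→+∞} L_k(Λ, sμ)/s`. -/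
def psiLow (d : ℕ) (Λ : Set (Fin d → ℝ)) (μ : Fin d → ℝ) (k : ℕ) : ℝ :=
  liminf (fun s : ℝ => Lk d Λ (s • μ) k / s) atTop

/-- Schmidt–Summerer upper exponent of the first type:
`ψ̄_k(Λ, μ) = limsup_{s→+∞} L_k(Λ, sμ)/s`. -/
def psiUp (d : ℕ) (Λ : Set (Fin d → ℝ)) (μ : Fin d → ℝ) (k : ℕ) : ℝ :=
  limsup (fun s : ℝ => Lk d Λ (s • μ) k / s) atTop

/-- Schmidt–Summerer lower exponent of the second type:
`Ψ̲_k(Λ, μ) = liminf_{s→+∞} S_k(Λ, sμ)/s`. -/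
def PsiLow (d : ℕ) (Λ : Set (Fin d → ℝ)) (μ : Fin d → ℝ) (k : ℕ) : ℝ :=
  liminf (fun s : ℝ => Sk d Λ (s • μ) k / s) atTop

/-- Schmidt–Summerer upper exponent of the second type:
`Ψ̄_k(Λ, μ) = limsup_{s→+∞} S_k(Λ, sμ)/s`. -/
def PsiUp (d : ℕ) (Λ : Set (Fin d → ℝ)) (μ : Fin d → ℝ) (k : ℕ) : ℝ :=
  limsup (fun s : ℝ => Sk d Λ (s • μ) k / s) atTop

/-- The system `|x|_σ ≤ t`, `|Θx − y|_ρ ≤ t^(−γ)` admits `k` linearly independent integer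
solutions. -/
def solvK {m n : ℕ} (Θ : Matrix (Fin n) (Fin m) ℝ) (σ : Fin m → ℝ) (ρ : Fin n → ℝ)
    (k : ℕ) (γ t : ℝ) : Prop :=
  ∃ v : Fin k → (Fin m → ℤ) × (Fin n → ℤ), LinearIndependent ℤ v ∧
    ∀ l, wnorm σ (fun j => ((v l).1 j : ℝ)) ≤ t ∧
      wnorm ρ (fun i => Θ.mulVec (fun j => ((v l).1 j : ℝ)) i - ((v l).2 i : ℝ)) ≤ t ^ (-γ)

/-- The `k`-th weighted Diophantine exponent `ω^(k)_{σ,ρ}(Θ)`. -/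
def omegaK {m n : ℕ} (Θ : Matrix (Fin n) (Fin m) ℝ) (σ : Fin m → ℝ) (ρ : Fin n → ℝ)
    (k : ℕ) : EReal :=
  sSup (Real.toEReal '' {γ : ℝ | ∀ T : ℝ, ∃ t > T, solvK Θ σ ρ k γ t})

/-- The `k`-th weighted uniform Diophantine exponent `ω̂^(k)_{σ,ρ}(Θ)`. -/
def omegaHatK {m n : ℕ} (Θ : Matrix (Fin n) (Fin m) ℝ) (σ : Fin m → ℝ) (ρ : Fin n → ℝ)
    (k : ℕ) : EReal :=
  sSup (Real.toEReal '' {γ : ℝ | ∃ T : ℝ, ∀ t > T, solvK Θ σ ρ k γ t})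

/-! A nonzero vector `v` of the dual lattice in a small box produces, by Mahler's transference
argument, a nonzero vector of the lattice in a box with sides proportional to `c i`: pair lattice
vectors with `v`, let this integral linear form replace the coordinate `k` at which `|v k| * c k` is
largest, and apply Minkowski's linear forms theorem. The vector `z` found satisfies
`|v ⬝ᵥ z| < 1`, hence `v ⬝ᵥ z = 0`, and solving for `z k` bounds the coordinate that was dropped.

A bound `ψ̲₁(Λ, μ) ≤ a` says that, for every `ε > 0`, boxes with sides `exp (s (μ i + a + ε))`
contain nonzero vectors of `Λ` for arbitrarily large `s`. Mahler's argument carries dual boxes at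
scale `s` to boxes at scale `α s`, and then the claim amounts to linear inequalities between `α`,
`γ`, `δ` and the weights. -/

open scoped Matrix

section GeometryOfNumbers

variable {ι : Type*} [Fintype ι]

open MeasureTheory in
theorem volume_pi_Ioo_neg_self {a : ι → ℝ} (ha : ∀ i, 0 < a i) :
    volume (Set.univ.pi fun i => Set.Ioo (-a i) (a i)) =
      ENNReal.ofReal (∏ i, a i) * 2 ^ Fintype.card ι := by
  simp only [Real.volume_pi_Ioo, sub_neg_eq_add, ← mul_two]
  rw [← ENNReal.ofReal_prod_of_nonneg fun i _ => by linarith [ha i], Finset.prod_mul_distrib,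
    Finset.prod_const, Finset.card_univ, ENNReal.ofReal_mul' (by positivity),
    ENNReal.ofReal_pow zero_le_two, ENNReal.ofReal_ofNat]

theorem abs_mul_abs_le_of_dotProduct_eq_zero {v z c : ι → ℝ} {k : ι} (hvz : v ⬝ᵥ z = 0)
    (hz : ∀ i, i ≠ k → |z i| ≤ c i) (hk : ∀ i, |v i| * c i ≤ |v k| * c k) :
    |v k| * |z k| ≤ (Fintype.card ι - 1) * (|v k| * c k) := by
  classical
  have hvk : v k * z k = -∑ i ∈ Finset.univ.erase k, v i * z i :=
    eq_neg_of_add_eq_zero_left <| (Finset.add_sum_erase _ (fun i => v i * z i)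
      (Finset.mem_univ k)).trans hvz
  calc |v k| * |z k| = |∑ i ∈ Finset.univ.erase k, v i * z i| := by rw [← abs_mul, hvk, abs_neg]
    _ ≤ ∑ i ∈ Finset.univ.erase k, |v i * z i| := Finset.abs_sum_le_sum_abs _ _
    _ ≤ ∑ _i ∈ Finset.univ.erase k, |v k| * c k := by
      refine Finset.sum_le_sum fun i hi => ?_
      rw [abs_mul]
      exact (mul_le_mul_of_nonneg_left (hz i (Finset.ne_of_mem_erase hi)) (abs_nonneg _)).trans
        (hk i)
    _ = (Fintype.card ι - 1) * (|v k| * c k) := by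
      rw [Finset.sum_const, nsmul_eq_mul, Finset.cast_card_erase_of_mem (Finset.mem_univ k),
        Finset.card_univ]

variable [DecidableEq ι] {M : Matrix ι ι ℝ}

open MeasureTheory in
theorem exists_int_abs_mulVec_lt_of_abs_det_lt_prod (hM : M.det ≠ 0) {a : ι → ℝ}
    (ha : ∀ i, 0 < a i) (h : |M.det| < ∏ i, a i) :
    ∃ p : ι → ℤ, p ≠ 0 ∧ ∀ i, |(M *ᵥ fun j => (p j : ℝ)) i| < a i := by
  let b : Module.Basis ι ℝ (ι → ℝ) :=
    (Pi.basisFun ℝ ι).map (Matrix.toLinearEquiv (Pi.basisFun ℝ ι) M hM.isUnit)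
  have hb (j : ι) : b j = M.col j := by
    simp [b, Matrix.toLin_eq_toLin']
  have hcovol : volume (ZSpan.fundamentalDomain b) = ENNReal.ofReal |M.det| := by
    rw [ZSpan.volume_fundamentalDomain, ← Matrix.det_transpose]
    congr 3
    ext i j
    simp [hb]
  have hvol : volume (ZSpan.fundamentalDomain b) * 2 ^ Module.finrank ℝ (ι → ℝ) <
      volume (Set.univ.pi fun i => Set.Ioo (-a i) (a i)) := by
    rw [hcovol, Module.finrank_fintype_fun_eq_card, volume_pi_Ioo_neg_self ha]
    gcongr
    · simp
    · exact (ENNReal.ofReal_lt_ofReal_iff ((abs_nonneg _).trans_lt h)).mpr h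
  have : Countable (Submodule.span ℤ (Set.range b)).toAddSubgroup :=
    inferInstanceAs (Countable (Submodule.span ℤ (Set.range b)))
  obtain ⟨⟨x, hx⟩, hx0, hxa⟩ := exists_ne_zero_mem_lattice_of_measure_mul_two_pow_lt_measure
    (ZSpan.isAddFundamentalDomain' b volume)
    (s := Set.univ.pi fun i => Set.Ioo (-a i) (a i))
    (fun x hx i hi => ⟨neg_lt_neg (hx i hi).2, neg_lt.mp (hx i hi).1⟩)
    (convex_pi fun i _ => convex_Ioo _ _) hvol
  obtain ⟨p, rfl⟩ := (Submodule.mem_span_range_iff_exists_fun ℤ).mp hx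
  have hp : ∑ j, p j • b j = M *ᵥ fun j => (p j : ℝ) := by
    ext i
    simp [hb, Matrix.mulVec, dotProduct, mul_comm]
  refine ⟨p, ?_, fun i => ?_⟩
  · rintro rfl
    simp at hx0
  · rw [← hp]
    exact abs_lt.mpr (hxa i trivial)

theorem det_updateRow_vecMul (M : Matrix ι ι ℝ) (v : ι → ℝ) (k : ι) :
    (M.updateRow k (v ᵥ* M)).det = v k * M.det := by
  rw [Matrix.vecMul_eq_sum, Matrix.det_updateRow_sum, smul_eq_mul]

theorem exists_int_dotProduct_mulVec_eq_zero (hM : M.det ≠ 0) {v : ι → ℝ} {k : ι} (hvk : v k ≠ 0)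
    {b : ι → ℤ} (hvM : v ᵥ* M = fun j => (b j : ℝ)) {c : ι → ℝ} (hc : ∀ i, 0 < c i)
    (hvc : |v k| * c k * |M.det| < ∏ j, c j) :
    ∃ p : ι → ℤ, p ≠ 0 ∧ v ⬝ᵥ (M *ᵥ fun j => (p j : ℝ)) = 0 ∧
      ∀ i, i ≠ k → |(M *ᵥ fun j => (p j : ℝ)) i| < c i := by
  have hdet : (M.updateRow k (v ᵥ* M)).det ≠ 0 := by
    rw [det_updateRow_vecMul]
    exact mul_ne_zero hvk hM
  have hlt : |(M.updateRow k (v ᵥ* M)).det| < ∏ i, Function.update c k 1 i := by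
    rw [det_updateRow_vecMul, Finset.prod_update_of_mem (Finset.mem_univ k), one_mul, abs_mul]
    refine lt_of_mul_lt_mul_left ?_ (hc k).le
    calc c k * (|v k| * |M.det|) = |v k| * c k * |M.det| := by ring
      _ < ∏ j, c j := hvc
      _ = c k * ∏ j ∈ Finset.univ \ {k}, c j :=
        Finset.prod_eq_mul_prod_sdiff_singleton_of_mem (Finset.mem_univ k) c
  have hpos (i : ι) : 0 < Function.update c k 1 i := by
    rcases eq_or_ne i k with rfl | hi <;> simp [*]
  obtain ⟨p, hp0, hp⟩ := exists_int_abs_mulVec_lt_of_abs_det_lt_prod hdet hpos hlt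
  rw [Matrix.updateRow_mulVec, ← Matrix.dotProduct_mulVec] at hp
  refine ⟨p, hp0, ?_, fun i hi => by simpa [hi] using hp i⟩
  have hint : v ⬝ᵥ (M *ᵥ fun j => (p j : ℝ)) = ((b ⬝ᵥ p : ℤ) : ℝ) := by
    rw [Matrix.dotProduct_mulVec, hvM]
    simp [dotProduct]
  have hlt_one : |v ⬝ᵥ (M *ᵥ fun j => (p j : ℝ))| < 1 := by simpa using hp k
  rw [hint] at hlt_one ⊢
  exact_mod_cast Int.abs_lt_one_iff.mp (by exact_mod_cast hlt_one)

theorem exists_int_abs_mulVec_le_card_mul (hM : M.det ≠ 0) {v : ι → ℝ} (hv : v ≠ 0) {b : ι → ℤ}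
    (hvM : v ᵥ* M = fun j => (b j : ℝ)) {c : ι → ℝ} (hc : ∀ i, 0 < c i)
    (hvc : ∀ i, |v i| * c i * |M.det| < ∏ j, c j) :
    ∃ p : ι → ℤ, p ≠ 0 ∧ ∀ i, |(M *ᵥ fun j => (p j : ℝ)) i| ≤ Fintype.card ι * c i := by
  obtain ⟨i₀, hi₀⟩ := Function.ne_iff.mp hv
  have : Nonempty ι := ⟨i₀⟩
  obtain ⟨k, hk⟩ := Finite.exists_max fun i => |v i| * c i
  have hvk : 0 < |v k| := pos_of_mul_pos_left
    ((mul_pos (abs_pos.mpr hi₀) (hc i₀)).trans_le (hk i₀)) (hc k).le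
  obtain ⟨p, hp0, hvp, hp⟩ :=
    exists_int_dotProduct_mulVec_eq_zero hM (abs_pos.mp hvk) hvM hc (hvc k)
  refine ⟨p, hp0, fun i => ?_⟩
  rcases eq_or_ne i k with rfl | hi
  · have := abs_mul_abs_le_of_dotProduct_eq_zero hvp (fun j hj => (hp j hj).le) hk
    refine le_of_mul_le_mul_left (this.trans ?_) hvk
    nlinarith [mul_pos hvk (hc i)]
  · exact (hp i hi).le.trans
      (le_mul_of_one_le_left (hc i).le (by exact_mod_cast Fintype.card_pos (α := ι)))

end GeometryOfNumbers

section FirstMinimum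

variable {ι : Type*} [Fintype ι]

/-- The factors `l > 0` for which `l B_τ` contains a nonzero vector of `Λ`. Their infimum is
`λ₁(B_τ, Λ)`; unlike `succMin`, membership mentions a vector and not a family indexed by `Fin 1`. -/
def capturingFactors (Λ : Set (ι → ℝ)) (τ : ι → ℝ) : Set ℝ :=
  {l | 0 < l ∧ ∃ v ∈ Λ, v ≠ 0 ∧ ∀ i, |v i| ≤ l * Real.exp (τ i)}

theorem norm_mul_exp_norm_mem_capturingFactors {Λ : Set (ι → ℝ)} {τ w : ι → ℝ}
    (hw : w ∈ Λ) (hw0 : w ≠ 0) :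
    ‖w‖ * Real.exp ‖τ‖ ∈ capturingFactors Λ τ := by
  refine ⟨by positivity, w, hw, hw0, fun i => ?_⟩
  have hτ : 0 ≤ ‖τ‖ + τ i := by
    linarith [neg_abs_le (τ i), norm_le_pi_norm τ i, Real.norm_eq_abs (τ i)]
  rw [mul_assoc, ← Real.exp_add]
  exact (norm_le_pi_norm w i).trans
    (le_mul_of_one_le_right (norm_nonneg w) (Real.one_le_exp hτ))

theorem norm_le_mul_exp_norm {v τ : ι → ℝ} {l : ℝ} (hl : 0 ≤ l)
    (hv : ∀ i, |v i| ≤ l * Real.exp (τ i)) : ‖v‖ ≤ l * Real.exp ‖τ‖ := by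
  refine (pi_norm_le_iff_of_nonneg (by positivity)).mpr fun i => (hv i).trans ?_
  gcongr
  exact (le_abs_self _).trans (norm_le_pi_norm τ i)

variable {d : ℕ} {Λ : Set (Fin d → ℝ)} {τ : Fin d → ℝ}

theorem succMin_one_eq_sInf (Λ : Set (Fin d → ℝ)) (τ : Fin d → ℝ) :
    succMin d Λ τ 1 = sInf (capturingFactors Λ τ) := by
  unfold succMin capturingFactors
  congr! 4 with l
  constructor
  · rintro ⟨v, hv, hli, hvl⟩
    exact ⟨v 0, hv 0, linearIndependent_unique_iff.mp hli, hvl 0⟩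
  · rintro ⟨v, hv, hv0, hvl⟩
    exact ⟨fun _ => v, fun _ => hv, linearIndependent_unique_iff.mpr hv0, fun _ => hvl⟩

theorem exists_of_Lk_one_lt (hne : ∃ w ∈ Λ, w ≠ 0) {b : ℝ} (hb : Lk d Λ τ 1 < b) :
    ∃ v ∈ Λ, v ≠ 0 ∧ ∀ i, |v i| ≤ Real.exp (b + τ i) := by
  obtain ⟨w, hw, hw0⟩ := hne
  have hlt : sInf (capturingFactors Λ τ) < Real.exp b := by
    rw [← succMin_one_eq_sInf]
    rcases le_or_gt (succMin d Λ τ 1) 0 with h0 | h0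
    · exact h0.trans_lt (Real.exp_pos b)
    · exact (Real.log_lt_iff_lt_exp h0).mp hb
  obtain ⟨l, ⟨-, v, hv, hv0, hvl⟩, hlb⟩ :=
    exists_lt_of_csInf_lt ⟨_, norm_mul_exp_norm_mem_capturingFactors hw hw0⟩ hlt
  refine ⟨v, hv, hv0, fun i => (hvl i).trans ?_⟩
  rw [Real.exp_add]
  gcongr

theorem succMin_one_le {l : ℝ} (hl : l ∈ capturingFactors Λ τ) : succMin d Λ τ 1 ≤ l := by
  rw [succMin_one_eq_sInf]
  exact csInf_le ⟨0, fun l hl => hl.1.le⟩ hl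

variable {r : ℝ} (hr : 0 < r) (hΛ : ∀ v ∈ Λ, v ≠ 0 → r ≤ ‖v‖)

include hΛ in
theorem mul_exp_neg_norm_le_succMin_one (hne : ∃ w ∈ Λ, w ≠ 0) :
    r * Real.exp (-‖τ‖) ≤ succMin d Λ τ 1 := by
  obtain ⟨w, hw, hw0⟩ := hne
  rw [succMin_one_eq_sInf]
  refine le_csInf ⟨_, norm_mul_exp_norm_mem_capturingFactors hw hw0⟩ ?_
  rintro l ⟨hl, v, hv, hv0, hvl⟩
  rw [Real.exp_neg, ← div_eq_mul_inv, div_le_iff₀ (Real.exp_pos _)]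
  exact (hΛ v hv hv0).trans (norm_le_mul_exp_norm hl.le hvl)

include hr hΛ

theorem succMin_one_pos (hne : ∃ w ∈ Λ, w ≠ 0) : 0 < succMin d Λ τ 1 :=
  (by positivity : 0 < r * Real.exp (-‖τ‖)).trans_le (mul_exp_neg_norm_le_succMin_one hΛ hne)

theorem Lk_one_le {v : Fin d → ℝ} (hv : v ∈ Λ) (hv0 : v ≠ 0) {b : ℝ}
    (hvb : ∀ i, |v i| ≤ Real.exp (b + τ i)) : Lk d Λ τ 1 ≤ b :=
  (Real.log_le_iff_le_exp (succMin_one_pos hr hΛ ⟨v, hv, hv0⟩)).mpr <| succMin_one_le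
    ⟨Real.exp_pos b, v, hv, hv0, fun i => (hvb i).trans_eq (Real.exp_add _ _)⟩

theorem abs_Lk_one_le {w : Fin d → ℝ} (hw : w ∈ Λ) (hw0 : w ≠ 0) :
    |Lk d Λ τ 1| ≤ |Real.log r| + |Real.log ‖w‖| + ‖τ‖ := by
  have hpos : 0 < succMin d Λ τ 1 := succMin_one_pos hr hΛ ⟨w, hw, hw0⟩
  have hlower : Real.log r - ‖τ‖ ≤ Lk d Λ τ 1 := by
    have := Real.log_le_log (by positivity)
      (mul_exp_neg_norm_le_succMin_one (τ := τ) hΛ ⟨w, hw, hw0⟩)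
    rwa [Real.log_mul hr.ne' (Real.exp_ne_zero _), Real.log_exp] at this
  have hupper : Lk d Λ τ 1 ≤ Real.log ‖w‖ + ‖τ‖ := by
    have := Real.log_le_log hpos
      (succMin_one_le (norm_mul_exp_norm_mem_capturingFactors (τ := τ) hw hw0))
    rwa [Real.log_mul (norm_ne_zero_iff.mpr hw0) (Real.exp_ne_zero _), Real.log_exp] at this
  refine abs_le.mpr ⟨?_, ?_⟩
  · linarith [neg_abs_le (Real.log r), abs_nonneg (Real.log ‖w‖)]
  · linarith [le_abs_self (Real.log ‖w‖), abs_nonneg (Real.log r)]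

theorem eventually_abs_Lk_one_div_le (μ : Fin d → ℝ) {w : Fin d → ℝ} (hw : w ∈ Λ) (hw0 : w ≠ 0) :
    ∀ᶠ s : ℝ in atTop,
      |Lk d Λ (s • μ) 1 / s| ≤ |Real.log r| + |Real.log ‖w‖| + ‖μ‖ := by
  filter_upwards [eventually_ge_atTop 1] with s hs
  have hs0 : 0 < s := by linarith
  rw [abs_div, abs_of_pos hs0, div_le_iff₀ hs0]
  have hLk := abs_Lk_one_le (τ := s • μ) hr hΛ hw hw0
  rw [norm_smul, Real.norm_of_nonneg hs0.le] at hLk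
  have hlogs := le_mul_of_one_le_right
    (add_nonneg (abs_nonneg (Real.log r)) (abs_nonneg (Real.log ‖w‖))) hs
  linarith

theorem psiLow_one_le_iff (hne : ∃ w ∈ Λ, w ≠ 0) {μ : Fin d → ℝ} {a : ℝ} :
    psiLow d Λ μ 1 ≤ a ↔ ∀ ε > 0, ∃ᶠ s : ℝ in atTop,
      ∃ v ∈ Λ, v ≠ 0 ∧ ∀ i, |v i| ≤ Real.exp (s * (μ i + a + ε)) := by
  obtain ⟨w, hw, hw0⟩ := hne
  have hbdd := eventually_abs_Lk_one_div_le hr hΛ μ hw hw0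
  have hbelow : IsBoundedUnder (· ≥ ·) atTop fun s : ℝ => Lk d Λ (s • μ) 1 / s :=
    isBoundedUnder_of_eventually_ge (hbdd.mono fun _ hs => (abs_le.mp hs).1)
  have hcobdd : IsCoboundedUnder (· ≥ ·) atTop fun s : ℝ => Lk d Λ (s • μ) 1 / s :=
    (isBoundedUnder_of_eventually_le
      (hbdd.mono fun _ hs => (abs_le.mp hs).2)).isCoboundedUnder_ge
  constructor
  · intro h ε hε
    refine ((frequently_lt_of_liminf_lt hcobdd
      (h.trans_lt (lt_add_of_pos_right a hε))).and_eventually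
      (eventually_gt_atTop 0)).mono fun s ⟨hs, hs0⟩ => ?_
    obtain ⟨v, hv, hv0, hvs⟩ := exists_of_Lk_one_lt ⟨w, hw, hw0⟩ ((div_lt_iff₀ hs0).mp hs)
    refine ⟨v, hv, hv0, fun i => (hvs i).trans_eq ?_⟩
    rw [Pi.smul_apply, smul_eq_mul]
    ring_nf
  · intro h
    refine le_of_forall_pos_le_add fun ε hε => liminf_le_of_frequently_le ?_ hbelow
    refine ((h ε hε).and_eventually (eventually_gt_atTop 0)).mono
      fun s ⟨⟨v, hv, hv0, hvs⟩, hs0⟩ => ?_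
    rw [div_le_iff₀ hs0]
    refine Lk_one_le hr hΛ hv hv0 fun i => (hvs i).trans_eq ?_
    rw [Pi.smul_apply, smul_eq_mul]
    ring_nf

end FirstMinimum

section ColumnLattice

variable {ι : Type*} [Fintype ι]

/-- The lattice `M ℤ^d` spanned by the columns of `M`. Its dual lattice is
`colLattice (M⁻¹)ᵀ` when `M` is invertible. -/
def colLattice (M : Matrix ι ι ℝ) : Set (ι → ℝ) :=
  Set.range fun p : ι → ℤ => M *ᵥ fun j => (p j : ℝ)

variable [DecidableEq ι] {M : Matrix ι ι ℝ}

theorem exists_mem_colLattice_ne_zero [Nonempty ι] (hM : M.det ≠ 0) :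
    ∃ w ∈ colLattice M, w ≠ 0 := by
  refine ⟨_, ⟨fun _ => 1, rfl⟩, fun h => ?_⟩
  have := congrFun (Matrix.eq_zero_of_mulVec_eq_zero hM h) (Classical.arbitrary ι)
  simp at this

open scoped Matrix.Norms.Operator in
theorem exists_pos_le_norm_of_mem_colLattice (hM : M.det ≠ 0) :
    ∃ r > 0, ∀ v ∈ colLattice M, v ≠ 0 → r ≤ ‖v‖ := by
  refine ⟨(‖M⁻¹‖ + 1)⁻¹, by positivity, ?_⟩
  rintro _ ⟨p, rfl⟩ hv
  obtain ⟨j, hj⟩ : ∃ j, p j ≠ 0 := Function.ne_iff.mp <| by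
    rintro rfl
    exact hv (by ext; simp [Matrix.mulVec])
  have hp : M⁻¹ *ᵥ (M *ᵥ fun j => (p j : ℝ)) = fun j => (p j : ℝ) := by
    rw [Matrix.mulVec_mulVec, Matrix.nonsing_inv_mul _ hM.isUnit, Matrix.one_mulVec]
  rw [inv_le_iff_one_le_mul₀' (by positivity)]
  calc (1 : ℝ) ≤ |(p j : ℝ)| := by exact_mod_cast Int.one_le_abs hj
    _ ≤ ‖M⁻¹ *ᵥ (M *ᵥ fun j => (p j : ℝ))‖ := by
      rw [hp]
      exact norm_le_pi_norm (fun j => (p j : ℝ)) j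
    _ ≤ ‖M⁻¹‖ * ‖M *ᵥ fun j => (p j : ℝ)‖ := Matrix.linfty_opNorm_mulVec _ _
    _ ≤ (‖M⁻¹‖ + 1) * ‖M *ᵥ fun j => (p j : ℝ)‖ := by gcongr; linarith

theorem exists_mem_colLattice_abs_le_of_mem_dual (hM : M.det ≠ 0) {v : ι → ℝ}
    (hv : v ∈ colLattice M⁻¹ᵀ) (hv0 : v ≠ 0) {c : ι → ℝ} (hc : ∀ i, 0 < c i)
    (hvc : ∀ i, |v i| * c i * |M.det| < ∏ j, c j) :
    ∃ z ∈ colLattice M, z ≠ 0 ∧ ∀ i, |z i| ≤ Fintype.card ι * c i := by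
  obtain ⟨b, rfl⟩ := hv
  have hb : (M⁻¹ᵀ *ᵥ fun j => (b j : ℝ)) ᵥ* M = fun j => (b j : ℝ) := by
    rw [Matrix.mulVec_transpose, Matrix.vecMul_vecMul, Matrix.nonsing_inv_mul _ hM.isUnit,
      Matrix.vecMul_one]
  obtain ⟨p, hp0, hp⟩ := exists_int_abs_mulVec_le_card_mul hM hv0 hb hc hvc
  refine ⟨_, ⟨p, rfl⟩, fun h => hp0 ?_, hp⟩
  ext j
  simpa using congrFun (Matrix.eq_zero_of_mulVec_eq_zero hM h) j

-- Mahler's theorem applies with `c i = exp (s (α (μ i + a) + η))`: `hμ` compares the main terms,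
-- and by `2 ≤ card ι` the terms in `η` leave a factor `exp (s η / 2)` to absorb the determinant.
theorem exists_mem_colLattice_abs_le_exp_of_mem_dual (hι : 2 ≤ Fintype.card ι) (hM : M.det ≠ 0)
    {μ μ' : ι → ℝ} {a a' α η s : ℝ}
    (hμ : ∀ i, μ' i + a' + α * (μ i + a) ≤ α * ∑ j, (μ j + a))
    (hη : 0 < η) (hs : 0 < s) (hsM : |M.det| < Real.exp (s * (η / 2)))
    (hsι : (Fintype.card ι : ℝ) ≤ Real.exp (s * η))
    {v : ι → ℝ} (hv : v ∈ colLattice M⁻¹ᵀ) (hv0 : v ≠ 0)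
    (hvs : ∀ i, |v i| ≤ Real.exp (s * (μ' i + a' + η / 2))) :
    ∃ z ∈ colLattice M, z ≠ 0 ∧ ∀ i, |z i| ≤ Real.exp (s * (α * (μ i + a) + 2 * η)) := by
  have hι' : (2 : ℝ) ≤ Fintype.card ι := by exact_mod_cast hι
  have hsum : ∑ j, s * (α * (μ j + a) + η) = s * (α * ∑ j, (μ j + a) + Fintype.card ι * η) := by
    rw [← Finset.mul_sum, Finset.sum_add_distrib, ← Finset.mul_sum]
    simp
  obtain ⟨z, hz, hz0, hzc⟩ := exists_mem_colLattice_abs_le_of_mem_dual hM hv hv0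
    (c := fun i => Real.exp (s * (α * (μ i + a) + η))) (fun i => Real.exp_pos _) fun i => by
      calc |v i| * Real.exp (s * (α * (μ i + a) + η)) * |M.det|
          ≤ Real.exp (s * (μ' i + a' + η / 2)) * Real.exp (s * (α * (μ i + a) + η)) *
              |M.det| := by
            gcongr
            exact hvs i
        _ < Real.exp (s * (μ' i + a' + η / 2)) * Real.exp (s * (α * (μ i + a) + η)) *
              Real.exp (s * (η / 2)) := by gcongr
        _ = Real.exp (s * (μ' i + a' + α * (μ i + a) + 2 * η)) := by
            rw [← Real.exp_add, ← Real.exp_add]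
            ring_nf
        _ ≤ Real.exp (s * (α * ∑ j, (μ j + a) + Fintype.card ι * η)) := by
            gcongr
            exact hμ i
        _ = ∏ j, Real.exp (s * (α * (μ j + a) + η)) := by rw [← Real.exp_sum, hsum]
  refine ⟨z, hz, hz0, fun i => (hzc i).trans ?_⟩
  calc (Fintype.card ι : ℝ) * Real.exp (s * (α * (μ i + a) + η))
      ≤ Real.exp (s * η) * Real.exp (s * (α * (μ i + a) + η)) := by gcongr
    _ = Real.exp (s * (α * (μ i + a) + 2 * η)) := by
      rw [← Real.exp_add]
      ring_nf

variable {d : ℕ} {M : Matrix (Fin d) (Fin d) ℝ}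

theorem psiLow_colLattice_one_le_iff [NeZero d] (hM : M.det ≠ 0) {μ : Fin d → ℝ} {a : ℝ} :
    psiLow d (colLattice M) μ 1 ≤ a ↔ ∀ ε > 0, ∃ᶠ s : ℝ in atTop,
      ∃ v ∈ colLattice M, v ≠ 0 ∧ ∀ i, |v i| ≤ Real.exp (s * (μ i + a + ε)) := by
  obtain ⟨r, hr, hMr⟩ := exists_pos_le_norm_of_mem_colLattice hM
  exact psiLow_one_le_iff hr hMr (exists_mem_colLattice_ne_zero hM)

theorem psiLow_colLattice_one_le_of_dual (hd : 2 ≤ d) (hM : M.det ≠ 0) {μ μ' : Fin d → ℝ}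
    {a a' α : ℝ} (hα : 0 < α)
    (hμ : ∀ i, μ' i + a' + α * (μ i + a) ≤ α * ∑ j, (μ j + a))
    (h : psiLow d (colLattice M⁻¹ᵀ) μ' 1 ≤ a') :
    psiLow d (colLattice M) μ 1 ≤ a := by
  have hM' : (M⁻¹ᵀ).det ≠ 0 := by
    rw [Matrix.det_transpose]
    exact (Matrix.isUnit_nonsing_inv_det M hM.isUnit).ne_zero
  have : NeZero d := ⟨by lia⟩
  rw [psiLow_colLattice_one_le_iff hM'] at h
  refine (psiLow_colLattice_one_le_iff hM).mpr fun ε hε => ?_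
  set η : ℝ := α * ε / 2 with hη_def
  have hη : 0 < η := by positivity
  have hexp {κ : ℝ} (hκ : 0 < κ) : Tendsto (fun s : ℝ => Real.exp (s * κ)) atTop atTop :=
    Real.tendsto_exp_atTop.comp (tendsto_id.atTop_mul_const hκ)
  have hlarge := ((hexp (half_pos hη)).eventually_gt_atTop |M.det|).and
    (((hexp hη).eventually_ge_atTop (d : ℝ)).and (eventually_gt_atTop 0))
  refine (tendsto_id.const_mul_atTop hα).frequently
    (((h (η / 2) (half_pos hη)).and_eventually hlarge).mono ?_)
  rintro s ⟨⟨v, hv, hv0, hvs⟩, hsM, hsd, hs⟩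
  obtain ⟨z, hz, hz0, hzs⟩ :=
    exists_mem_colLattice_abs_le_exp_of_mem_dual (by simpa using hd) hM hμ hη hs hsM
      (by simpa using hsd) hv hv0 hvs
  refine ⟨z, hz, hz0, fun i => (hzs i).trans_eq ?_⟩
  rw [hη_def, id]
  ring_nf

end ColumnLattice

section DiophantineLattice

variable {m n : ℕ}

theorem colLattice_reindex_fromBlocks (A : Matrix (Fin m) (Fin m) ℝ)
    (B : Matrix (Fin m) (Fin n) ℝ) (C : Matrix (Fin n) (Fin m) ℝ) (D : Matrix (Fin n) (Fin n) ℝ) :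
    colLattice (Matrix.reindex finSumFinEquiv finSumFinEquiv (Matrix.fromBlocks A B C D)) =
      {v | ∃ (x : Fin m → ℤ) (y : Fin n → ℤ), v = Fin.append
        (A *ᵥ (fun j => (x j : ℝ)) + B *ᵥ fun i => (y i : ℝ))
        (C *ᵥ (fun j => (x j : ℝ)) + D *ᵥ fun i => (y i : ℝ))} := by
  have hmul (p : Fin (m + n) → ℤ) :
      Matrix.reindex finSumFinEquiv finSumFinEquiv (Matrix.fromBlocks A B C D) *ᵥ
        (fun k => (p k : ℝ)) = Fin.append
        (A *ᵥ (fun j => (p (Fin.castAdd n j) : ℝ)) + B *ᵥ fun i => (p (Fin.natAdd m i) : ℝ))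
        (C *ᵥ (fun j => (p (Fin.castAdd n j) : ℝ)) + D *ᵥ fun i => (p (Fin.natAdd m i) : ℝ)) := by
    rw [Matrix.reindex_apply, Matrix.submatrix_mulVec_equiv, Matrix.fromBlocks_mulVec]
    ext k
    refine Fin.addCases (fun j => ?_) (fun i => ?_) k <;> simp [Function.comp_def]
  ext v
  constructor
  · rintro ⟨p, rfl⟩
    exact ⟨_, _, hmul p⟩
  · rintro ⟨x, y, rfl⟩
    exact ⟨Fin.append x y, by simp only [hmul, Fin.append_left, Fin.append_right]⟩

/-- The unimodular matrix `[1, 0; -Θ, 1]`, whose columns span `Λ(Θ)`. -/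
def lattMatrix (Θ : Matrix (Fin n) (Fin m) ℝ) : Matrix (Fin (m + n)) (Fin (m + n)) ℝ :=
  Matrix.reindex finSumFinEquiv finSumFinEquiv (Matrix.fromBlocks 1 0 (-Θ) 1)

theorem det_lattMatrix (Θ : Matrix (Fin n) (Fin m) ℝ) : (lattMatrix Θ).det = 1 := by
  rw [lattMatrix, Matrix.det_reindex_self, Matrix.det_fromBlocks_zero₁₂, Matrix.det_one,
    Matrix.det_one, one_mul]

theorem latt_eq_colLattice (Θ : Matrix (Fin n) (Fin m) ℝ) :
    latt m n Θ = colLattice (lattMatrix Θ) := by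
  rw [lattMatrix, colLattice_reindex_fromBlocks]
  simp only [latt, Matrix.one_mulVec, Matrix.zero_mulVec, Matrix.neg_mulVec, add_zero,
    neg_add_eq_sub]
  rfl

theorem lattDual_eq_colLattice (Θ : Matrix (Fin n) (Fin m) ℝ) :
    lattDual m n Θ = colLattice (lattMatrix Θ)⁻¹ᵀ := by
  have hinv : (lattMatrix Θ)⁻¹ᵀ =
      Matrix.reindex finSumFinEquiv finSumFinEquiv (Matrix.fromBlocks 1 Θᵀ 0 1) := by
    rw [lattMatrix, Matrix.inv_reindex, Matrix.inv_fromBlocks_zero₁₂_of_isUnit_iff _ _ _ (by simp),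
      Matrix.transpose_reindex, Matrix.fromBlocks_transpose]
    simp
  rw [hinv, colLattice_reindex_fromBlocks]
  simp only [lattDual, Matrix.one_mulVec, Matrix.zero_mulVec, zero_add]
  rfl

variable {σ : Fin m → ℝ} {ρ : Fin n → ℝ}

theorem muGamma_castAdd_add (γ : ℝ) (j : Fin m) :
    muGamma m n σ ρ γ (Fin.castAdd n j) + (1 - γ) = (m + n : ℕ) * σ j := by
  simp only [muGamma, eOne, eTwo, Pi.add_apply, Pi.neg_apply, Pi.smul_apply, smul_eq_mul,
    Fin.append_left]
  ring

theorem muGamma_natAdd_add (γ : ℝ) (i : Fin n) :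
    muGamma m n σ ρ γ (Fin.natAdd m i) + (1 - γ) = -(γ * ((m + n : ℕ) * ρ i.rev)) := by
  simp only [muGamma, eOne, eTwo, Pi.add_apply, Pi.neg_apply, Pi.smul_apply, smul_eq_mul,
    Fin.append_right]
  ring

theorem muStar_castAdd_add (δ : ℝ) (j : Fin m) :
    muStar m n σ ρ δ (Fin.castAdd n j) + (1 - δ) = -(δ * ((m + n : ℕ) * σ j)) := by
  simp only [muStar, eOne, eTwo, Pi.sub_apply, Pi.smul_apply, smul_eq_mul, Fin.append_left]
  ring

theorem muStar_natAdd_add (δ : ℝ) (i : Fin n) :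
    muStar m n σ ρ δ (Fin.natAdd m i) + (1 - δ) = (m + n : ℕ) * ρ i.rev := by
  simp only [muStar, eOne, eTwo, Pi.sub_apply, Pi.smul_apply, smul_eq_mul, Fin.append_right]
  ring

theorem sum_muGamma_add (hσ : ∑ j, σ j = 1) (hρ : ∑ i, ρ i = 1) (γ : ℝ) :
    ∑ k, (muGamma m n σ ρ γ k + (1 - γ)) = (m + n : ℕ) * (1 - γ) := by
  have hρ' : ∑ i : Fin n, ρ i.rev = 1 := (Equiv.sum_comp Fin.revPerm ρ).trans hρ
  simp only [Fin.sum_univ_add, muGamma_castAdd_add, muGamma_natAdd_add, Finset.sum_neg_distrib,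
    ← Finset.mul_sum, hσ, hρ']
  ring

theorem psiLow_latt_one_le_of_lattDual {Θ : Matrix (Fin n) (Fin m) ℝ} (hσ : ∑ j, σ j = 1)
    (hρ : ∑ i, ρ i = 1) {α γ δ : ℝ} (hα : 0 < α)
    (hασ : ∀ j, α * (γ - 1) ≤ (δ - α) * σ j) (hαρ : ∀ i, α * (γ - 1) ≤ (α * γ - 1) * ρ i)
    (h : psiLow (m + n) (lattDual m n Θ) (muStar m n σ ρ δ) 1 ≤ 1 - δ) :
    psiLow (m + n) (latt m n Θ) (muGamma m n σ ρ γ) 1 ≤ 1 - γ := by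
  have hm : m ≠ 0 := by rintro rfl; simp at hσ
  have hn : n ≠ 0 := by rintro rfl; simp at hρ
  rw [lattDual_eq_colLattice] at h
  rw [latt_eq_colLattice]
  refine psiLow_colLattice_one_le_of_dual (by lia) (by simp [det_lattMatrix]) hα (fun k => ?_) h
  rw [sum_muGamma_add hσ hρ]
  have hd : (0 : ℝ) ≤ (m + n : ℕ) := Nat.cast_nonneg _
  refine Fin.addCases (fun j => ?_) (fun i => ?_) k
  · rw [muStar_castAdd_add, muGamma_castAdd_add]
    linarith [mul_le_mul_of_nonneg_left (hασ j) hd]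
  · rw [muStar_natAdd_add, muGamma_natAdd_add]
    linarith [mul_le_mul_of_nonneg_left (hαρ i.rev) hd]

end DiophantineLattice

theorem le_one_of_forall_le_of_sum_eq_one {ι : Type*} [Fintype ι] {w : ι → ℝ} {t : ℝ}
    (ht : 0 ≤ t) (hw : ∀ j, t ≤ w j) (hsum : ∑ j, w j = 1) : t ≤ 1 := by
  obtain ⟨j⟩ : Nonempty ι := by
    by_contra! h
    simp at hsum
  calc t ≤ w j := hw j
    _ ≤ ∑ j, w j := Finset.single_le_sum (fun i _ => ht.trans (hw i)) (Finset.mem_univ j)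
    _ = 1 := hsum

-- With `S` and `R` the inverses of the smallest weights, the conclusion is equality at these
-- weights in both conditions of `psiLow_latt_one_le_of_lattDual`; the formula for `γ` comes from
-- there.
theorem exists_transference_scale {S R δ γ : ℝ} (hS : 1 ≤ S) (hR : 1 ≤ R) (hδ : 1 ≤ δ)
    (hγ : γ = (S - 1 + R * δ) / (S + (R - 1) * δ)) :
    ∃ α q : ℝ, 0 < α ∧ 0 ≤ q ∧ α * (γ - 1) = q ∧ δ - α = S * q ∧ α * γ - 1 = R * q := by
  have hD : 0 < S + R - 1 := by linarith
  have hN : 0 < S + (R - 1) * δ := by nlinarith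
  refine ⟨(S + (R - 1) * δ) / (S + R - 1), (δ - 1) / (S + R - 1), div_pos hN hD,
    div_nonneg (by linarith) hD.le, ?_, ?_, ?_⟩ <;> subst hγ <;> field_simp <;> ring

theorem le_inv_mul_mul {t w q : ℝ} (ht : 0 < t) (hw : t ≤ w) (hq : 0 ≤ q) : q ≤ t⁻¹ * q * w := by
  rw [mul_right_comm]
  exact le_mul_of_one_le_left hq ((one_le_inv_mul₀ ht).mpr hw)

theorem stmt13_general {m n : ℕ} (Θ : Matrix (Fin n) (Fin m) ℝ) (σ : Fin m → ℝ) (ρ : Fin n → ℝ)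
    {s r : ℝ} (hs : 0 < s) (hr : 0 < r) (hsσ : ∀ j, s ≤ σ j) (hrρ : ∀ i, r ≤ ρ i)
    (hσ : ∑ j, σ j = 1) (hρ : ∑ i, ρ i = 1) {δ γ : ℝ} (hδ : 1 ≤ δ)
    (hγ : γ = (s⁻¹ - 1 + r⁻¹ * δ) / (s⁻¹ + (r⁻¹ - 1) * δ))
    (h : psiLow (m + n) (lattDual m n Θ) (muStar m n σ ρ δ) 1 ≤ 1 - δ) :
    psiLow (m + n) (latt m n Θ) (muGamma m n σ ρ γ) 1 ≤ 1 - γ := by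
  have hs1 : 1 ≤ s⁻¹ := (one_le_inv₀ hs).mpr (le_one_of_forall_le_of_sum_eq_one hs.le hsσ hσ)
  have hr1 : 1 ≤ r⁻¹ := (one_le_inv₀ hr).mpr (le_one_of_forall_le_of_sum_eq_one hr.le hrρ hρ)
  obtain ⟨α, q, hα, hq, hαγ, hαδ, hαγ'⟩ := exists_transference_scale hs1 hr1 hδ hγ
  refine psiLow_latt_one_le_of_lattDual hσ hρ hα (fun j => ?_) (fun i => ?_) h
  · rw [hαγ, hαδ]
    exact le_inv_mul_mul hs (hsσ j) hq
  · rw [hαγ, hαγ']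
    exact le_inv_mul_mul hr (hrρ i) hq

theorem stmt13 {m n : ℕ} (Θ : Matrix (Fin (n + 1)) (Fin (m + 1)) ℝ)
    (σ : Fin (m + 1) → ℝ) (ρ : Fin (n + 1) → ℝ)
    (hσa : Antitone σ) (hρa : Antitone ρ)
    (hσp : ∀ j, 0 < σ j) (hρp : ∀ i, 0 < ρ i)
    (hσs : ∑ j, σ j = 1) (hρs : ∑ i, ρ i = 1)
    (δ : ℝ) (hδ : 1 ≤ δ)
    (γδ : ℝ)
    (hγδ : γδ = (((σ (Fin.last m))⁻¹ - 1) + (ρ (Fin.last n))⁻¹ * δ) /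
      ((σ (Fin.last m))⁻¹ + ((ρ (Fin.last n))⁻¹ - 1) * δ))
    (hpsi : psiLow (m + 1 + (n + 1)) (lattDual (m + 1) (n + 1) Θ)
      (muStar (m + 1) (n + 1) σ ρ δ) 1 ≤ 1 - δ) :
    psiLow (m + 1 + (n + 1)) (latt (m + 1) (n + 1) Θ)
      (muGamma (m + 1) (n + 1) σ ρ γδ) 1 ≤ 1 - γδ :=
  stmt13_general Θ σ ρ (hσp _) (hρp _) (fun j => hσa (Fin.le_last j))
    (fun i => hρa (Fin.le_last i)) hσs hρs hδ hγδ hpsi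
end
end

section
/- For every k ∈ {1,…,d} one has ω^{(k)}_{σ,ρ}(Θ) · ω̂^{(d+1−k)}_{ρ,σ}(ᵀΘ) = 1 and ω̂^{(k)}_{σ,ρ}(Θ) · ω^{(d+1−k)}_{ρ,σ}(ᵀΘ) = 1, where all four exponents take values in [0,+∞] and the convention is that if one factor equals 0 then the other equals +∞ and vice versa. Equivalently: for every real γ > 0, ω^{(k)}_{σ,ρ}(Θ) ≥ γ if and only if ω̂^{(d+1−k)}_{ρ,σ}(ᵀΘ) ≤ γ^{−1}, and ω̂^{(k)}_{σ,ρ}(Θ) ≥ γ if and only if ω^{(d+1−k)}_{ρ,σ}(ᵀΘ) ≤ γ^{−1}. -/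
open Filter

noncomputable section

/-! For `P = [1 0; Θ -1]` the two systems ask for integer points in the boxes cut out by the linear
forms of `P` and, after the substitution `(y, x) ↦ (-x, y)`, of `Pᵀ`. Since `P` is an involution,
the forms of `P` and `Pᵀ` are dual: `z ⬝ᵥ w = (P z) ⬝ᵥ (Pᵀ w)`.

If the sides of two dual boxes have small products, this integer is less than one in absolute value
for `z` and `w` in the boxes, so all points of one box are orthogonal to all points of the other
and there are at most `d` independent ones altogether. Conversely (Mahler), let independent integer
vectors realize the successive minima of the Euclidean norm of `P z`. By Minkowski's second theorem
the cofactors of these vectors are small for the dual forms. If `k + l = d + 1`, then either the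
first `k` vectors or the last `l` cofactor vectors lie in the prescribed box, up to a constant.

With the parameter `t` in the first system and `t ^ s` in the second one, the products of the sides
of the boxes are negative powers of `t` if `δ⁻¹ < s < γ` and positive powers if `γ < s < δ⁻¹`.
-/

open Matrix
open scoped ENNReal NNReal Topology

/-! ### Reciprocal suprema -/

/-- `X` and `Y` are mutually reciprocal elements of `[0, ∞]`, with `0⁻¹ = ∞` and `∞⁻¹ = 0`. The
inverse is that of `ℝ≥0∞`, which has these values, unlike the one of `EReal`. -/
def IsReciprocal (X Y : EReal) : Prop := ∃ x : ℝ≥0∞, X = x ∧ Y = (x⁻¹ : ℝ≥0∞)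

namespace IsReciprocal

variable {X Y : EReal}

theorem symm (h : IsReciprocal X Y) : IsReciprocal Y X := by
  obtain ⟨x, rfl, rfl⟩ := h
  exact ⟨x⁻¹, rfl, by rw [inv_inv]⟩

theorem coe_le_iff (h : IsReciprocal X Y) {γ : ℝ} (hγ : 0 < γ) :
    (γ : EReal) ≤ X ↔ Y ≤ (γ⁻¹ : ℝ) := by
  obtain ⟨x, rfl, rfl⟩ := h
  lift γ to ℝ≥0 using hγ.le
  rw [← NNReal.coe_inv]
  change ((γ : ℝ≥0∞) : EReal) ≤ x ↔ ((x⁻¹ : ℝ≥0∞) : EReal) ≤ ((γ⁻¹ : ℝ≥0) : ℝ≥0∞)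
  rw [EReal.coe_ennreal_le_coe_ennreal_iff, EReal.coe_ennreal_le_coe_ennreal_iff,
    ENNReal.coe_inv (by exact_mod_cast hγ.ne'), ENNReal.inv_le_inv]

theorem mul_eq_one (h : IsReciprocal X Y) {a b : ℝ} (ha : X = a) (hb : Y = b) : a * b = 1 := by
  obtain ⟨x, rfl, rfl⟩ := h
  have hx_top : x ≠ ⊤ := by rintro rfl; simp at ha
  have hx_zero : x ≠ 0 := by rintro rfl; simp at hb
  lift x to ℝ≥0 using hx_top
  rw [← ENNReal.coe_inv (by exact_mod_cast hx_zero)] at hb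
  have ha' : (x : ℝ) = a := EReal.coe_injective ha
  have hb' : ((x⁻¹ : ℝ≥0) : ℝ) = b := EReal.coe_injective hb
  rw [← ha', ← hb', NNReal.coe_inv, mul_inv_cancel₀ (by exact_mod_cast hx_zero)]

theorem eq_zero_iff (h : IsReciprocal X Y) : X = 0 ↔ Y = ⊤ := by
  obtain ⟨x, rfl, rfl⟩ := h
  simp

theorem eq_top_iff (h : IsReciprocal X Y) : X = ⊤ ↔ Y = 0 :=
  h.symm.eq_zero_iff.symm

theorem of_forall_coe_le_iff (hX : 0 ≤ X) (hY : 0 ≤ Y)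
    (h : ∀ γ : ℝ, 0 < γ → ((γ : EReal) ≤ X ↔ Y ≤ (γ⁻¹ : ℝ))) : IsReciprocal X Y := by
  lift X to ℝ≥0∞ using hX
  lift Y to ℝ≥0∞ using hY
  refine ⟨X, rfl, ?_⟩
  suffices X = Y⁻¹ by rw [this, inv_inv]
  refine ENNReal.eq_of_forall_nnreal_le_iff fun γ ↦ ?_
  rcases eq_or_ne γ 0 with rfl | hγ
  · simp
  have key := h γ (by positivity)
  rw [← NNReal.coe_inv] at key
  change ((γ : ℝ≥0∞) : EReal) ≤ X ↔ (Y : EReal) ≤ ((γ⁻¹ : ℝ≥0) : ℝ≥0∞) at key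
  rw [EReal.coe_ennreal_le_coe_ennreal_iff, EReal.coe_ennreal_le_coe_ennreal_iff,
    ENNReal.coe_inv hγ] at key
  rw [key, ENNReal.le_inv_iff_le_inv]

end IsReciprocal

theorem sSup_coe_nonneg {S : Set ℝ} (hS : Set.Iio 0 ⊆ S) :
    0 ≤ sSup (Real.toEReal '' S) := by
  refine EReal.ge_of_forall_gt_iff_ge.mp fun γ hγ ↦ ?_
  exact le_sSup ⟨γ, hS (EReal.coe_neg'.mp hγ), rfl⟩

theorem isReciprocal_sSup_sSup {S U : Set ℝ} (hS : Set.Iio 0 ⊆ S) (hU : Set.Iio 0 ⊆ U)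
    (mul_le_one : ∀ γ ∈ S, ∀ δ ∈ U, 0 < δ → γ * δ ≤ 1)
    (mem_or_mem : ∀ γ δ, 0 < γ → 0 < δ → γ * δ < 1 → γ ∈ S ∨ δ ∈ U) :
    IsReciprocal (sSup (Real.toEReal '' S)) (sSup (Real.toEReal '' U)) := by
  refine .of_forall_coe_le_iff (sSup_coe_nonneg hS) (sSup_coe_nonneg hU) fun γ hγ ↦ ⟨?_, ?_⟩
  · intro hγS
    refine sSup_le ?_
    rintro _ ⟨δ, hδU, rfl⟩
    by_contra! hlt
    have hδ : γ⁻¹ < δ := EReal.coe_lt_coe_iff.mp hlt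
    have hδ₀ : 0 < δ := (inv_pos.mpr hγ).trans hδ
    have : ((δ⁻¹ : ℝ) : EReal) < sSup (Real.toEReal '' S) :=
      (EReal.coe_lt_coe_iff.mpr (inv_lt_of_inv_lt₀ hγ hδ)).trans_le hγS
    obtain ⟨_, ⟨γ', hγ'S, rfl⟩, hγ'⟩ := lt_sSup_iff.mp this
    have hγ' : δ⁻¹ < γ' := EReal.coe_lt_coe_iff.mp hγ'
    have := mul_le_one γ' hγ'S δ hδU hδ₀
    exact this.not_gt ((inv_lt_iff_one_lt_mul₀ hδ₀).mp hγ')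
  · intro hU_le
    refine EReal.ge_of_forall_gt_iff_ge.mp fun γ' hγ' ↦ ?_
    have hγ' : γ' < γ := EReal.coe_lt_coe_iff.mp hγ'
    rcases le_or_gt γ' 0 with hneg | hpos
    · exact (EReal.coe_nonpos.mpr hneg).trans (sSup_coe_nonneg hS)
    obtain ⟨δ, hγδ, hδγ'⟩ := exists_between (inv_strictAnti₀ hpos hγ')
    have hδ₀ : 0 < δ := (inv_pos.mpr hγ).trans hγδ
    have hlt : γ' * δ < 1 := (lt_inv_mul_iff₀ hpos).mp (by simpa using hδγ')
    suffices γ' ∈ S from le_sSup ⟨γ', this, rfl⟩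
    refine (mem_or_mem γ' δ hpos hδ₀ hlt).resolve_right fun hδU ↦ ?_
    have : ((δ : ℝ) : EReal) ≤ (γ⁻¹ : ℝ) := (le_sSup (Set.mem_image_of_mem _ hδU)).trans hU_le
    exact hγδ.not_ge (EReal.coe_le_coe_iff.mp this)

/-! ### Integer points in boxes -/

/-- `S` contains `k` vectors which are linearly independent over `ℤ`. -/
def HasIndependent {M : Type*} [AddCommGroup M] (k : ℕ) (S : Set M) : Prop :=
  ∃ v : Fin k → M, LinearIndependent ℤ v ∧ ∀ a, v a ∈ S

namespace HasIndependent

variable {M M' : Type*} [AddCommGroup M] [AddCommGroup M'] {k : ℕ} {S S' : Set M}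

theorem mono (h : HasIndependent k S) (hS : S ⊆ S') : HasIndependent k S' :=
  let ⟨v, hv, hvS⟩ := h
  ⟨v, hv, fun a ↦ hS (hvS a)⟩

theorem image (h : HasIndependent k S) (e : M ≃ₗ[ℤ] M') : HasIndependent k (e '' S) :=
  let ⟨v, hv, hvS⟩ := h
  ⟨e ∘ v, hv.map' e.toLinearMap e.ker, fun a ↦ ⟨v a, hvS a, rfl⟩⟩

theorem preimage_iff (e : M ≃ₗ[ℤ] M') (S : Set M') :
    HasIndependent k (e ⁻¹' S) ↔ HasIndependent k S := by
  refine ⟨fun h ↦ (h.image e).mono (Set.image_preimage_subset e S), fun h ↦ ?_⟩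
  have := h.image e.symm
  rwa [LinearEquiv.image_symm_eq_preimage] at this

end HasIndependent

/-- The integer vectors `z` at which each linear form given by a row of `A` has absolute value at
most the corresponding entry of `c`. -/
def formBox {ι κ : Type*} [Fintype κ] (A : Matrix ι κ ℝ) (c : ι → ℝ) : Set (κ → ℤ) :=
  {z | ∀ i, |(A *ᵥ (Int.cast ∘ z)) i| ≤ c i}

section Duality

variable {ι : Type*} [Fintype ι]

theorem card_add_card_le_of_dotProduct_eq_zero {K κ κ' : Type*} [Field K] [Fintype κ] [Fintype κ']
    {v : κ → ι → K} {w : κ' → ι → K} (hv : LinearIndependent K v) (hw : LinearIndependent K w)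
    (h : ∀ a b, v a ⬝ᵥ w b = 0) :
    Fintype.card κ + Fintype.card κ' ≤ Fintype.card ι := by
  have hvw : Matrix.of v * (Matrix.of w)ᵀ = 0 := Matrix.ext h
  have := rank_add_rank_le_card_of_mul_eq_zero hvw
  rwa [rank_transpose, LinearIndependent.rank_matrix (M := Matrix.of v) hv,
    LinearIndependent.rank_matrix (M := Matrix.of w) hw] at this

variable [DecidableEq ι] {A B : Matrix ι ι ℝ} {c c' : ι → ℝ}

theorem dotProduct_eq_zero_of_mem_formBox (hAB : Aᵀ * B = 1) (hc : ∑ i, c i * c' i < 1)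
    {z w : ι → ℤ} (hz : z ∈ formBox A c) (hw : w ∈ formBox B c') : z ⬝ᵥ w = 0 := by
  have hzw : ((z ⬝ᵥ w : ℤ) : ℝ) = (A *ᵥ (Int.cast ∘ z)) ⬝ᵥ (B *ᵥ (Int.cast ∘ w)) := by
    rw [dotProduct_mulVec, vecMul_mulVec, hAB, vecMul_one]
    simp [dotProduct]
  have hlt : |((z ⬝ᵥ w : ℤ) : ℝ)| < 1 := by
    rw [hzw]
    calc |(A *ᵥ (Int.cast ∘ z)) ⬝ᵥ (B *ᵥ (Int.cast ∘ w))|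
        ≤ ∑ i, |(A *ᵥ (Int.cast ∘ z)) i * (B *ᵥ (Int.cast ∘ w)) i| :=
          Finset.abs_sum_le_sum_abs _ _
      _ ≤ ∑ i, c i * c' i := by
          gcongr with i
          rw [abs_mul]
          exact mul_le_mul (hz i) (hw i) (abs_nonneg _) ((abs_nonneg _).trans (hz i))
      _ < 1 := hc
  exact Int.abs_lt_one_iff.mp (by exact_mod_cast hlt)

theorem add_le_card_of_hasIndependent_formBox (hAB : Aᵀ * B = 1) (hc : ∑ i, c i * c' i < 1)
    {k l : ℕ} (hA : HasIndependent k (formBox A c)) (hB : HasIndependent l (formBox B c')) :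
    k + l ≤ Fintype.card ι := by
  obtain ⟨v, hv, hvA⟩ := hA
  obtain ⟨w, hw, hwB⟩ := hB
  have h (a : Fin k) (b : Fin l) : (Int.cast ∘ v a : ι → ℝ) ⬝ᵥ (Int.cast ∘ w b) = 0 := by
    have := dotProduct_eq_zero_of_mem_formBox hAB hc (hvA a) (hwB b)
    simp only [dotProduct] at this
    simp only [dotProduct, Function.comp_apply]
    exact_mod_cast this
  simpa only [Fintype.card_fin] using card_add_card_le_of_dotProduct_eq_zero
    (linearIndependent_algebraMap_comp_iff (S := ℝ).mpr hv)
    (linearIndependent_algebraMap_comp_iff (S := ℝ).mpr hw) h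

end Duality

section Minkowski

open MeasureTheory

variable {ι : Type*} [Fintype ι]

theorem exists_ne_zero_intCast_mem_of_two_pow_lt_volume {s : Set (ι → ℝ)}
    (h_symm : ∀ x ∈ s, -x ∈ s) (h_conv : Convex ℝ s)
    (h : ENNReal.ofReal (2 ^ Fintype.card ι) < volume s) :
    ∃ z : ι → ℤ, z ≠ 0 ∧ Int.cast ∘ z ∈ s := by
  have fund := ZSpan.isAddFundamentalDomain' (Pi.basisFun ℝ ι) volume
  have : Countable (Submodule.span ℤ (Set.range (Pi.basisFun ℝ ι))).toAddSubgroup :=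
    inferInstanceAs (Countable (Submodule.span ℤ (Set.range (Pi.basisFun ℝ ι))))
  obtain ⟨⟨x, hx_mem⟩, hx_ne, hxs⟩ :=
    exists_ne_zero_mem_lattice_of_measure_mul_two_pow_lt_measure (s := s) fund h_symm h_conv (by
      rw [ZSpan.fundamentalDomain_pi_basisFun, Real.volume_pi_Ico,
        Module.finrank_fintype_fun_eq_card]
      simpa [ENNReal.ofReal_pow] using h)
  obtain ⟨z, rfl⟩ : ∃ z : ι → ℤ, Int.cast ∘ z = x := by
    have hx_int := (Module.Basis.mem_span_iff_repr_mem ℤ (Pi.basisFun ℝ ι) x).mp hx_mem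
    choose z hz using hx_int
    exact ⟨z, funext fun i ↦ by simpa using hz i⟩
  refine ⟨z, ?_, hxs⟩
  rintro rfl
  exact hx_ne (Subtype.ext (funext fun i ↦ by simp))

variable [DecidableEq ι] {A : Matrix ι ι ℝ} {c : ι → ℝ}

theorem volume_preimage_mulVec_pi_Ioo (hA : A.det ≠ 0) (hc : ∀ i, 0 < c i) :
    volume (A.toLin' ⁻¹' Set.univ.pi fun i ↦ Set.Ioo (-c i) (c i)) =
      ENNReal.ofReal (|A.det|⁻¹ * ∏ i, (2 * c i)) := by
  rw [Measure.addHaar_preimage_linearMap _ (by rwa [LinearMap.det_toLin']), LinearMap.det_toLin',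
    Real.volume_pi_Ioo, ENNReal.ofReal_mul (by positivity), abs_inv,
    ENNReal.ofReal_prod_of_nonneg fun i _ ↦ by linarith [hc i]]
  simp only [sub_neg_eq_add, two_mul]

theorem exists_ne_zero_abs_mulVec_lt (hA : A.det ≠ 0) (hc : ∀ i, 0 < c i)
    (h : |A.det| < ∏ i, c i) :
    ∃ z : ι → ℤ, z ≠ 0 ∧ ∀ i, |(A *ᵥ (Int.cast ∘ z)) i| < c i := by
  have hA' : 0 < |A.det| := abs_pos.mpr hA
  obtain ⟨z, hz_ne, hz⟩ := exists_ne_zero_intCast_mem_of_two_pow_lt_volume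
      (s := A.toLin' ⁻¹' Set.univ.pi fun i ↦ Set.Ioo (-c i) (c i))
      (fun x hx i _ ↦ by simpa [mulVec_neg, and_comm, neg_lt] using hx i trivial)
      ((convex_pi fun i _ ↦ convex_Ioo _ _).is_linear_preimage A.toLin'.isLinear) (by
    rw [volume_preimage_mulVec_pi_Ioo hA hc, Finset.prod_mul_distrib, Finset.prod_const,
      Finset.card_univ, ENNReal.ofReal_lt_ofReal_iff_of_nonneg (by positivity),
      lt_inv_mul_iff₀ hA', mul_comm]
    gcongr)
  exact ⟨z, hz_ne, fun i ↦ abs_lt.mpr (hz i trivial)⟩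

end Minkowski

/-! ### Minkowski's second theorem for the Euclidean norm -/

section EuclideanNorm

variable {ι : Type*} [Fintype ι]

/-- The Euclidean norm of the vector of values at `z` of the linear forms given by the rows of
`A`. -/
def formNorm (A : Matrix ι ι ℝ) (z : ι → ℤ) : ℝ := ‖WithLp.toLp 2 (A *ᵥ (Int.cast ∘ z))‖

theorem formNorm_nonneg (A : Matrix ι ι ℝ) (z : ι → ℤ) : 0 ≤ formNorm A z := norm_nonneg _

theorem abs_mulVec_le_formNorm (A : Matrix ι ι ℝ) (z : ι → ℤ) (i : ι) :
    |(A *ᵥ (Int.cast ∘ z)) i| ≤ formNorm A z :=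
  PiLp.norm_apply_le (WithLp.toLp 2 (A *ᵥ (Int.cast ∘ z))) i

theorem formNorm_le_sum_abs (A : Matrix ι ι ℝ) (z : ι → ℤ) :
    formNorm A z ≤ ∑ i, |(A *ᵥ (Int.cast ∘ z)) i| := by
  rw [formNorm, EuclideanSpace.norm_eq]
  exact Real.sqrt_le_left (by positivity) |>.mpr (Finset.sum_sq_le_sq_sum_of_nonneg (by simp))

variable [DecidableEq ι]

theorem abs_det_of_mem_orthogonalGroup {Q : Matrix ι ι ℝ} (hQ : Q ∈ orthogonalGroup ι ℝ) :
    |Q.det| = 1 := by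
  rw [← abs_one, ← sq_eq_sq_iff_abs_eq_abs, one_pow, pow_two]
  exact Unitary.star_mul_self_of_mem (det_of_mem_unitary hQ)

theorem formNorm_mul_of_mem_orthogonalGroup {Q : Matrix ι ι ℝ} (hQ : Q ∈ orthogonalGroup ι ℝ)
    (A : Matrix ι ι ℝ) (z : ι → ℤ) : formNorm (Q * A) z = formNorm A z := by
  rw [formNorm, formNorm, ← sq_eq_sq₀ (norm_nonneg _) (norm_nonneg _),
    EuclideanSpace.real_norm_sq_eq, EuclideanSpace.real_norm_sq_eq, ← mulVec_mulVec]
  simp only [pow_two]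
  change (Q *ᵥ _) ⬝ᵥ (Q *ᵥ _) = _ ⬝ᵥ _
  rw [dotProduct_mulVec, vecMul_mulVec, (mem_orthogonalGroup_iff' ι ℝ).mp hQ, vecMul_one]

theorem formNorm_pos {A : Matrix ι ι ℝ} (hA : A.det ≠ 0) {z : ι → ℤ} (hz : z ≠ 0) :
    0 < formNorm A z := by
  refine norm_pos_iff.mpr fun h ↦ hz ?_
  have := eq_zero_of_mulVec_eq_zero hA ((WithLp.toLp_eq_zero 2).mp h)
  exact funext fun i ↦ by simpa using congrFun this i

theorem tendsto_formNorm_cofinite {A : Matrix ι ι ℝ} (hA : A.det ≠ 0) :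
    Tendsto (formNorm A) cofinite atTop := by
  let f : (ι → ℝ) →ₗ[ℝ] EuclideanSpace ℝ ι :=
    (WithLp.linearEquiv 2 ℝ (ι → ℝ)).symm.toLinearMap ∘ₗ A.toLin'
  have hf : Function.Injective f :=
    (WithLp.linearEquiv 2 ℝ (ι → ℝ)).symm.injective.comp
      (mulVec_injective_of_isUnit ((isUnit_iff_isUnit_det A).mpr hA.isUnit))
  have hcast : Tendsto (fun z : ι → ℤ ↦ (Int.cast ∘ z : ι → ℝ)) cofinite (cocompact _) := by
    simpa only [coprodᵢ_cofinite, coprodᵢ_cocompact] using!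
      Tendsto.pi_map_coprodᵢ fun _ : ι ↦ Int.tendsto_coe_cofinite
  exact tendsto_norm_cocompact_atTop.comp
    ((LinearMap.isClosedEmbedding_of_injective
      (LinearMap.ker_eq_bot.mpr hf)).tendsto_cocompact.comp hcast)

end EuclideanNorm

theorem tendsto_sum_comp_cofinite {ι α : Type*} [Fintype ι] {N : α → ℝ} (hN₀ : ∀ a, 0 ≤ N a)
    (hN : Tendsto N cofinite atTop) :
    Tendsto (fun v : ι → α ↦ ∑ i, N (v i)) cofinite atTop := by
  refine tendsto_atTop.mpr fun R ↦ ?_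
  have hfin : {a | ¬R ≤ N a}.Finite := tendsto_atTop.mp hN R
  refine (Set.Finite.pi' fun _ : ι ↦ hfin).subset fun v hv i hi ↦ hv ?_
  exact hi.trans (Finset.single_le_sum (fun j _ ↦ hN₀ (v j)) (Finset.mem_univ i))

variable {d : ℕ}

/-- The rows of `V` realize the successive minima of `N` on the integer lattice: they are linearly
independent and of increasing size, and the `i`-th row cannot be replaced by a smaller vector
without losing independence. By Cramer's rule, `Vᵀ.cramer z i ≠ 0` says that `z` has a non-zero
coefficient at the `i`-th row. -/
structure IsSuccessivelyMinimal (N : (Fin d → ℤ) → ℝ) (V : Matrix (Fin d) (Fin d) ℤ) : Prop where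
  det_ne_zero : V.det ≠ 0
  monotone : Monotone fun i ↦ N (V i)
  le_of_cramer_ne_zero : ∀ i z, Vᵀ.cramer z i ≠ 0 → N (V i) ≤ N z

theorem le_of_cramer_ne_zero_of_forall_sum_le {N : (Fin d → ℤ) → ℝ} {V : Matrix (Fin d) (Fin d) ℤ}
    (hV : ∀ W : Matrix (Fin d) (Fin d) ℤ, W.det ≠ 0 → ∑ i, N (V i) ≤ ∑ i, N (W i))
    {i : Fin d} {z : Fin d → ℤ} (hz : Vᵀ.cramer z i ≠ 0) : N (V i) ≤ N z := by
  rw [cramer_transpose_apply] at hz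
  have h := hV _ hz
  have hrow (j : Fin d) : N (V.updateRow i z j) = Function.update (fun j ↦ N (V j)) i (N z) j :=
    Function.apply_update (fun _ ↦ N) V i z j
  simp only [hrow, Finset.sum_update_of_mem (Finset.mem_univ i)] at h
  rw [Finset.sum_eq_add_sum_sdiff_singleton_of_mem (Finset.mem_univ i)] at h
  exact le_of_add_le_add_right h

theorem exists_isSuccessivelyMinimal {N : (Fin d → ℤ) → ℝ} (hN₀ : ∀ z, 0 ≤ N z)
    (hN : Tendsto N cofinite atTop) : ∃ V, IsSuccessivelyMinimal N V := by
  obtain ⟨W, hW, hW_min⟩ := (tendsto_sum_comp_cofinite hN₀ hN).exists_within_forall_le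
    (s := {V : Matrix (Fin d) (Fin d) ℤ | V.det ≠ 0}) ⟨1, by simp⟩
  let s := Tuple.sort fun i ↦ N (W i)
  refine ⟨W.submatrix s id, ?_, Tuple.monotone_sort fun i ↦ N (W i), fun i z ↦
    le_of_cramer_ne_zero_of_forall_sum_le fun V hV ↦ ?_⟩
  · rw [det_permute]
    exact mul_ne_zero (Int.cast_ne_zero.mpr (Units.ne_zero _)) hW
  · exact (Equiv.sum_comp s fun i ↦ N (W i)).trans_le (hW_min V hV)

theorem exists_mem_orthogonalGroup_mul_isUpperTriangular (X : Matrix (Fin d) (Fin d) ℝ) :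
    ∃ Q ∈ orthogonalGroup (Fin d) ℝ, (Q * X).IsUpperTriangular := by
  let f : Fin d → EuclideanSpace ℝ (Fin d) := fun j ↦ WithLp.toLp 2 (X.col j)
  let b := InnerProductSpace.gramSchmidtOrthonormalBasis (𝕜 := ℝ) (by simp) f
  let e := EuclideanSpace.basisFun (Fin d) ℝ
  refine ⟨b.toBasis.toMatrix e, b.toMatrix_orthonormalBasis_mem_orthogonal e, ?_⟩
  have hX : X = e.toBasis.toMatrix f := rfl
  rw [hX, ← e.coe_toBasis, Module.Basis.toMatrix_mul_toMatrix]
  exact InnerProductSpace.gramSchmidtOrthonormalBasis_inv_isUpperTriangular _ f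

theorem mulVec_apply_eq_zero_of_isUpperTriangular {A : Matrix (Fin d) (Fin d) ℝ}
    {V : Matrix (Fin d) (Fin d) ℤ} (hV : V.det ≠ 0)
    (hAV : (A * Vᵀ.map Int.cast).IsUpperTriangular) {z : Fin d → ℤ} {i : Fin d}
    (hz : ∀ l > i, Vᵀ.cramer z l = 0) {j : Fin d} (hij : i < j) :
    (A *ᵥ (Int.cast ∘ z)) j = 0 := by
  have hcramer : Vᵀ.map Int.cast *ᵥ (Int.cast ∘ Vᵀ.cramer z) =
      (V.det : ℝ) • (Int.cast ∘ z : Fin d → ℝ) := by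
    ext l
    have := congrFun (mulVec_cramer Vᵀ z) l
    rw [det_transpose] at this
    calc (Vᵀ.map Int.cast *ᵥ (Int.cast ∘ Vᵀ.cramer z)) l
        = (((Vᵀ *ᵥ Vᵀ.cramer z) l : ℤ) : ℝ) := ((Int.castRingHom ℝ).map_mulVec Vᵀ _ l).symm
      _ = (V.det : ℝ) * z l := by rw [this]; simp
  have : (V.det : ℝ) * (A *ᵥ (Int.cast ∘ z)) j = 0 := by
    rw [← smul_eq_mul, ← Pi.smul_apply, ← mulVec_smul, ← hcramer, mulVec_mulVec]
    change ∑ l, (A * Vᵀ.map (Int.cast : ℤ → ℝ)) j l * (Vᵀ.cramer z l : ℝ) = 0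
    refine Finset.sum_eq_zero fun l _ ↦ ?_
    rcases le_or_gt l i with hl | hl
    · rw [hAV (hl.trans_lt hij), zero_mul]
    · simp [hz l hl]
  exact (mul_eq_zero.mp this).resolve_left (Int.cast_ne_zero.mpr hV)

theorem IsSuccessivelyMinimal.exists_le_and_mulVec_apply_eq_zero {N : (Fin d → ℤ) → ℝ}
    {V : Matrix (Fin d) (Fin d) ℤ} (hV : IsSuccessivelyMinimal N V) {A : Matrix (Fin d) (Fin d) ℝ}
    (hAV : (A * Vᵀ.map Int.cast).IsUpperTriangular) {z : Fin d → ℤ} (hz : z ≠ 0) :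
    ∃ i, N (V i) ≤ N z ∧ ∀ j > i, (A *ᵥ (Int.cast ∘ z)) j = 0 := by
  have hcramer : ∃ i, Vᵀ.cramer z i ≠ 0 := by
    by_contra! h
    have := mulVec_cramer Vᵀ z
    rw [funext h, ← Pi.zero_def, mulVec_zero, det_transpose] at this
    exact (smul_ne_zero hV.det_ne_zero hz) this.symm
  obtain ⟨i, hi, hi_max⟩ := (Set.toFinite {i | Vᵀ.cramer z i ≠ 0}).exists_maximal hcramer
  refine ⟨i, hV.le_of_cramer_ne_zero i z hi, fun j hij ↦
    mulVec_apply_eq_zero_of_isUpperTriangular hV.det_ne_zero hAV (fun l hl ↦ ?_) hij⟩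
  by_contra hl₀
  exact hl.not_ge (hi_max hl₀ hl.le)

theorem IsSuccessivelyMinimal.formNorm_pos {A : Matrix (Fin d) (Fin d) ℝ} (hA : A.det ≠ 0)
    {V : Matrix (Fin d) (Fin d) ℤ} (hV : IsSuccessivelyMinimal (formNorm A) V) (i : Fin d) :
    0 < formNorm A (V i) :=
  _root_.formNorm_pos hA fun h ↦ hV.det_ne_zero (det_eq_zero_of_row_eq_zero i (congrFun h))

theorem IsSuccessivelyMinimal.prod_formNorm_le {A : Matrix (Fin d) (Fin d) ℝ} (hA : A.det ≠ 0)
    {V : Matrix (Fin d) (Fin d) ℤ} (hV : IsSuccessivelyMinimal (formNorm A) V) :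
    ∏ i, formNorm A (V i) ≤ d ^ d * |A.det| := by
  by_contra! hlt
  -- After a rotation the forms with index `> i` vanish on the span of the rows `≤ i` of `V`, so a
  -- point of the box with sides `formNorm A (V j) / d` contradicts minimality.
  obtain ⟨Q, hQ, hQV⟩ := exists_mem_orthogonalGroup_mul_isUpperTriangular (A * Vᵀ.map Int.cast)
  rw [← mul_assoc] at hQV
  have hQ_det : |(Q * A).det| = |A.det| := by
    rw [det_mul, abs_mul, abs_det_of_mem_orthogonalGroup hQ, one_mul]
  have hd (i : Fin d) : (0 : ℝ) < d := by exact_mod_cast i.pos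
  obtain ⟨z, hz_ne, hz⟩ := exists_ne_zero_abs_mulVec_lt (A := Q * A)
    (c := fun i ↦ formNorm A (V i) / d) (by rwa [← abs_ne_zero, hQ_det, abs_ne_zero])
    (fun i ↦ div_pos (hV.formNorm_pos hA i) (hd i)) (by
      rw [hQ_det, Finset.prod_div_distrib, Finset.prod_const, Finset.card_univ, Fintype.card_fin,
        lt_div_iff₀' (by exact_mod_cast Nat.pow_self_pos)]
      exact hlt)
  obtain ⟨i, hi, hi_zero⟩ := hV.exists_le_and_mulVec_apply_eq_zero hQV hz_ne
  have hz_lt (j : Fin d) : |((Q * A) *ᵥ (Int.cast ∘ z)) j| < formNorm A (V i) / d := by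
    rcases le_or_gt j i with hj | hj
    · exact (hz j).trans_le (div_le_div_of_nonneg_right (hV.monotone hj) (hd i).le)
    · rw [hi_zero j hj, abs_zero]
      exact div_pos (hV.formNorm_pos hA i) (hd i)
  refine hi.not_gt ?_
  calc formNorm A z = formNorm (Q * A) z := (formNorm_mul_of_mem_orthogonalGroup hQ A z).symm
    _ ≤ ∑ j, |((Q * A) *ᵥ (Int.cast ∘ z)) j| := formNorm_le_sum_abs _ _
    _ < ∑ _j : Fin d, formNorm A (V i) / d :=
      Finset.sum_lt_sum_of_nonempty ⟨i, Finset.mem_univ i⟩ fun j _ ↦ hz_lt j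
    _ = formNorm A (V i) := by
      rw [Finset.sum_const, Finset.card_univ, Fintype.card_fin, nsmul_eq_mul,
        mul_div_cancel₀ _ (hd i).ne']

/-! ### Mahler's duality -/

theorem abs_det_le_factorial_mul_prod {X : Matrix (Fin d) (Fin d) ℝ} {c : Fin d → ℝ}
    (hX : ∀ i j, |X i j| ≤ c j) : |X.det| ≤ d.factorial * ∏ j, c j := by
  rw [det_apply]
  calc |∑ s : Equiv.Perm (Fin d), Equiv.Perm.sign s • ∏ j, X (s j) j|
      ≤ ∑ s : Equiv.Perm (Fin d), |Equiv.Perm.sign s • ∏ j, X (s j) j| :=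
        Finset.abs_sum_le_sum_abs _ _
    _ ≤ ∑ _s : Equiv.Perm (Fin d), ∏ j, c j := by
        gcongr with s
        have hsign : |((Equiv.Perm.sign s : ℤ) : ℝ)| = 1 := by
          rcases Int.units_eq_one_or (Equiv.Perm.sign s) with h | h <;> simp [h]
        rw [Units.smul_def, zsmul_eq_mul, abs_mul, hsign, one_mul, Finset.abs_prod]
        exact Finset.prod_le_prod (fun j _ ↦ abs_nonneg _) fun j _ ↦ hX (s j) j
    _ = d.factorial * ∏ j, c j := by
        rw [Finset.sum_const, Finset.card_univ, Fintype.card_perm, Fintype.card_fin, nsmul_eq_mul]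

theorem mul_abs_adjugate_le_factorial_mul_prod {X : Matrix (Fin d) (Fin d) ℝ} {c : Fin d → ℝ}
    (hX : ∀ i j, |X i j| ≤ c j) (i j : Fin d) :
    c i * |X.adjugate i j| ≤ d.factorial * ∏ l, c l := by
  have hadj : X.adjugate i j = (X.updateCol i (Pi.single j 1)).det := by
    rw [← cramer_apply, cramer_eq_adjugate_mulVec, mulVec_single_one, col_apply]
  have hcol (a b : Fin d) :
      |X.updateCol i (Pi.single j 1) a b| ≤ Function.update c i 1 b := by
    rcases eq_or_ne b i with rfl | hb
    · rw [updateCol_self, Function.update_self, Pi.single_apply]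
      split_ifs <;> simp
    · rw [updateCol_ne hb, Function.update_of_ne hb]
      exact hX a b
  calc c i * |X.adjugate i j| ≤ c i * (d.factorial * ∏ l, Function.update c i 1 l) := by
        rw [hadj]
        exact mul_le_mul_of_nonneg_left (abs_det_le_factorial_mul_prod hcol)
          ((abs_nonneg _).trans (hX i i))
    _ = d.factorial * ∏ l, c l := by
        rw [Finset.prod_update_of_mem (Finset.mem_univ i),
          Finset.prod_eq_mul_prod_sdiff_singleton_of_mem (Finset.mem_univ i) c]
        ring

theorem det_ne_zero_of_transpose_mul_eq_one {ι K : Type*} [Fintype ι] [DecidableEq ι] [Field K]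
    {A B : Matrix ι ι K} (hAB : Aᵀ * B = 1) : A.det ≠ 0 := by
  rw [← det_transpose]
  exact det_ne_zero_of_right_inverse hAB

theorem adjugate_mul_apply_of_transpose_mul_eq_one {A B : Matrix (Fin d) (Fin d) ℝ}
    (hAB : Aᵀ * B = 1) (V : Matrix (Fin d) (Fin d) ℤ) (i j : Fin d) :
    (A * Vᵀ.map Int.cast).adjugate i j =
      A.det * (B *ᵥ (Int.cast ∘ Vᵀ.adjugate i)) j := by
  have hA : A.adjugate = A.det • Bᵀ := by
    have hBA : Bᵀ * A = 1 := by rw [← transpose_inj, transpose_mul, transpose_transpose, hAB,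
      transpose_one]
    calc A.adjugate = Bᵀ * A * A.adjugate := by rw [hBA, one_mul]
      _ = A.det • Bᵀ := by rw [mul_assoc, mul_adjugate, mul_smul_one]
  have hV : (Vᵀ.map (Int.cast : ℤ → ℝ)).adjugate = Vᵀ.adjugate.map Int.cast :=
    ((Int.castRingHom ℝ).map_adjugate Vᵀ).symm
  rw [adjugate_mul_distrib, hA, hV, Matrix.mul_smul, Matrix.smul_apply, smul_eq_mul]
  simp only [mul_apply, transpose_apply, mulVec, dotProduct, map_apply, Function.comp_apply,
    mul_comm]

theorem IsSuccessivelyMinimal.formNorm_mul_abs_le {A B : Matrix (Fin d) (Fin d) ℝ}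
    (hAB : Aᵀ * B = 1) {V : Matrix (Fin d) (Fin d) ℤ}
    (hV : IsSuccessivelyMinimal (formNorm A) V) (i j : Fin d) :
    formNorm A (V i) * |(B *ᵥ (Int.cast ∘ Vᵀ.adjugate i)) j| ≤ d.factorial * d ^ d := by
  have hA : A.det ≠ 0 := det_ne_zero_of_transpose_mul_eq_one hAB
  have hX (a b : Fin d) : |(A * Vᵀ.map (Int.cast : ℤ → ℝ)) a b| ≤ formNorm A (V b) :=
    abs_mulVec_le_formNorm A (V b) a
  refine le_of_mul_le_mul_right ?_ (abs_pos.mpr hA)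
  calc formNorm A (V i) * |(B *ᵥ (Int.cast ∘ Vᵀ.adjugate i)) j| * |A.det|
      = formNorm A (V i) * |(A * Vᵀ.map Int.cast).adjugate i j| := by
        rw [adjugate_mul_apply_of_transpose_mul_eq_one hAB, abs_mul]
        ring
    _ ≤ d.factorial * ∏ l, formNorm A (V l) := mul_abs_adjugate_le_factorial_mul_prod hX i j
    _ ≤ d.factorial * (d ^ d * |A.det|) := by
        gcongr
        exact hV.prod_formNorm_le hA
    _ = d.factorial * d ^ d * |A.det| := by ring

theorem hasIndependent_of_det_ne_zero {V : Matrix (Fin d) (Fin d) ℤ} (hV : V.det ≠ 0) {k : ℕ}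
    (f : Fin k ↪ Fin d) {S : Set (Fin d → ℤ)} (hS : ∀ a, V (f a) ∈ S) : HasIndependent k S :=
  ⟨fun a ↦ V (f a), (linearIndependent_rows_of_det_ne_zero hV).comp f f.injective, hS⟩

theorem hasIndependent_formBox_one_or {A B : Matrix (Fin d) (Fin d) ℝ} (hAB : Aᵀ * B = 1)
    {k l : ℕ} (hk : 1 ≤ k) (hl : 1 ≤ l) (hkl : k + l = d + 1) :
    HasIndependent k (formBox A 1) ∨
      HasIndependent l (formBox B fun _ ↦ d.factorial * d ^ d) := by
  obtain ⟨p, rfl⟩ := Nat.exists_eq_add_of_le' hk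
  obtain rfl : d = p + l := by omega
  have hA : A.det ≠ 0 := det_ne_zero_of_transpose_mul_eq_one hAB
  obtain ⟨V, hV⟩ := exists_isSuccessivelyMinimal (formNorm_nonneg A) (tendsto_formNorm_cofinite hA)
  rcases le_or_gt (formNorm A (V ⟨p, by omega⟩)) 1 with hp | hp
  · refine .inl (hasIndependent_of_det_ne_zero hV.det_ne_zero (Fin.castLEEmb (by omega))
      fun a i ↦ ?_)
    exact (abs_mulVec_le_formNorm A _ i).trans
      ((hV.monotone (Fin.mk_le_mk.mpr (Nat.le_of_lt_succ a.2))).trans hp)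
  · have hW : Vᵀ.adjugate.det ≠ 0 := by
      rw [det_adjugate, det_transpose]
      exact pow_ne_zero _ hV.det_ne_zero
    refine .inr (hasIndependent_of_det_ne_zero hW (Fin.natAddEmb p) fun a i ↦ ?_)
    refine (le_mul_of_one_le_left (abs_nonneg _) ?_).trans (hV.formNorm_mul_abs_le hAB _ i)
    exact hp.le.trans (hV.monotone (Fin.mk_le_mk.mpr (Nat.le_add_right p a)))

section Mahler

variable {ι : Type*} [Fintype ι]

theorem hasIndependent_formBox_submatrix_iff {κ : Type*} [Fintype κ] (e : κ ≃ ι)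
    (A : Matrix ι ι ℝ) (c : ι → ℝ) {k : ℕ} :
    HasIndependent k (formBox (A.submatrix e e) (c ∘ e)) ↔ HasIndependent k (formBox A c) := by
  rw [← HasIndependent.preimage_iff (LinearEquiv.funCongrLeft ℤ ℤ e)]
  refine iff_of_eq (congrArg _ (Set.ext fun z ↦ ?_))
  have hmul : A.submatrix e e *ᵥ (Int.cast ∘ z ∘ e) = (A *ᵥ (Int.cast ∘ z)) ∘ e := by
    rw [← Function.comp_assoc, submatrix_mulVec_equiv, Function.comp_assoc, e.self_comp_symm,
      Function.comp_id]
  change (∀ i, |(A.submatrix e e *ᵥ (Int.cast ∘ z ∘ e)) i| ≤ c (e i)) ↔ _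
  rw [hmul]
  exact e.forall_congr_left (p := fun i ↦ |(A *ᵥ (Int.cast ∘ z)) (e i)| ≤ c (e i)) |>.trans
    (by simp [formBox])

variable [DecidableEq ι]

theorem formBox_diagonal_mul {a : ι → ℝ} (ha : ∀ i, 0 < a i) (A : Matrix ι ι ℝ) (c : ι → ℝ) :
    formBox (diagonal a * A) (a * c) = formBox A c := by
  ext z
  refine forall_congr' fun i ↦ ?_
  rw [← mulVec_mulVec, mulVec_diagonal, abs_mul, abs_of_pos (ha i), Pi.mul_apply,
    mul_le_mul_iff_right₀ (ha i)]

theorem hasIndependent_formBox_or {A B : Matrix ι ι ℝ} (hAB : Aᵀ * B = 1) {c : ι → ℝ}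
    (hc : ∀ i, 0 < c i) {k l : ℕ} (hk : 1 ≤ k) (hl : 1 ≤ l) (hkl : k + l = Fintype.card ι + 1) :
    HasIndependent k (formBox A c) ∨ HasIndependent l (formBox B fun i ↦
      (Fintype.card ι).factorial * Fintype.card ι ^ Fintype.card ι / c i) := by
  have hcc : c⁻¹ * c = 1 := funext fun i ↦ inv_mul_cancel₀ (hc i).ne'
  have hdiag : diagonal c⁻¹ * diagonal c = 1 := by
    rw [diagonal_mul_diagonal, ← diagonal_one]
    exact congrArg diagonal hcc
  let e := (Fintype.equivFin ι).symm
  have hdual : ((diagonal c⁻¹ * A).submatrix e e)ᵀ * (diagonal c * B).submatrix e e = 1 := by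
    rw [transpose_submatrix, submatrix_mul_equiv, transpose_mul, diagonal_transpose, mul_assoc,
      ← mul_assoc (diagonal c⁻¹), hdiag, one_mul, hAB, submatrix_one_equiv]
  refine (hasIndependent_formBox_one_or hdual hk hl hkl).imp (fun h ↦ ?_) (fun h ↦ ?_)
  · rwa [← formBox_diagonal_mul (a := c⁻¹) (fun i ↦ inv_pos.mpr (hc i)) A,
      ← hasIndependent_formBox_submatrix_iff e, hcc]
  · rw [← formBox_diagonal_mul hc B, ← hasIndependent_formBox_submatrix_iff e]
    convert h using 3 with i
    exact mul_div_cancel₀ _ (hc (e i)).ne'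

end Mahler

/-! ### Weighted Diophantine exponents -/

section PowerBox

variable {ι : Type*} [Fintype ι]

theorem eventually_hasIndependent_formBox_rpow (A : Matrix ι ι ℝ) {α : ι → ℝ} (hα : ∀ i, 0 < α i)
    {k : ℕ} (hk : k ≤ Fintype.card ι) :
    ∀ᶠ t : ℝ in atTop, HasIndependent k (formBox A fun i ↦ t ^ α i) := by
  classical
  let v : Fin k → ι → ℤ := fun a ↦ Pi.basisFun ℤ ι ((Fintype.equivFin ι).symm (Fin.castLE hk a))
  have hv : LinearIndependent ℤ v := (Pi.basisFun ℤ ι).linearIndependent.comp _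
    ((Fintype.equivFin ι).symm.injective.comp (Fin.castLE_injective hk))
  have hlarge : ∀ᶠ t : ℝ in atTop, ∀ a, v a ∈ formBox A fun i ↦ t ^ α i :=
    eventually_all.mpr fun a ↦ eventually_all.mpr fun i ↦
      (tendsto_rpow_atTop (hα i)).eventually_ge_atTop _
  exact hlarge.mono fun t ht ↦ ⟨v, hv, ht⟩

variable [DecidableEq ι] {A B : Matrix ι ι ℝ} (hAB : Aᵀ * B = 1) {α β : ι → ℝ} {k l : ℕ}
include hAB

theorem eventually_not_hasIndependent_formBox_rpow_and (hαβ : ∀ i, α i + β i < 0)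
    (hkl : Fintype.card ι < k + l) :
    ∀ᶠ t : ℝ in atTop, ¬(HasIndependent k (formBox A fun i ↦ t ^ α i) ∧
      HasIndependent l (formBox B fun i ↦ t ^ β i)) := by
  have hsum : Tendsto (fun t : ℝ ↦ ∑ i, t ^ (α i + β i)) atTop (𝓝 0) := by
    rw [← Finset.sum_const_zero (s := (Finset.univ : Finset ι))]
    exact tendsto_finsetSum _ fun i _ ↦ by
      simpa using tendsto_rpow_neg_atTop (neg_pos.mpr (hαβ i))
  filter_upwards [hsum.eventually_lt_const one_pos, eventually_gt_atTop 0] with t ht ht₀ ⟨hA, hB⟩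
  refine hkl.not_ge (add_le_card_of_hasIndependent_formBox hAB ?_ hA hB)
  simpa only [Real.rpow_add ht₀] using ht

theorem eventually_hasIndependent_formBox_rpow_or (hαβ : ∀ i, 0 < α i + β i) (hk : 1 ≤ k)
    (hl : 1 ≤ l) (hkl : k + l = Fintype.card ι + 1) :
    ∀ᶠ t : ℝ in atTop, HasIndependent k (formBox A fun i ↦ t ^ α i) ∨
      HasIndependent l (formBox B fun i ↦ t ^ β i) := by
  let C : ℝ := (Fintype.card ι).factorial * Fintype.card ι ^ Fintype.card ι
  have hlarge : ∀ᶠ t : ℝ in atTop, ∀ i, C ≤ t ^ (α i + β i) :=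
    eventually_all.mpr fun i ↦ (tendsto_rpow_atTop (hαβ i)).eventually_ge_atTop C
  filter_upwards [hlarge, eventually_gt_atTop 0] with t ht ht₀
  have hα i : 0 < t ^ α i := Real.rpow_pos_of_pos ht₀ _
  refine (hasIndependent_formBox_or hAB hα hk hl hkl).imp_right fun h ↦
    h.mono fun z hz i ↦ (hz i).trans ?_
  rw [div_le_iff₀' (hα i), ← Real.rpow_add ht₀]
  exact ht i

end PowerBox

theorem eventually_atTop_comp_rpow_iff {p : ℝ → Prop} {s : ℝ} (hs : 0 < s) :
    (∀ᶠ t in atTop, p (t ^ s)) ↔ ∀ᶠ t in atTop, p t := by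
  refine ⟨fun h ↦ ?_, (tendsto_rpow_atTop hs).eventually⟩
  filter_upwards [(tendsto_rpow_atTop (inv_pos.mpr hs)).eventually h, eventually_gt_atTop 0]
    with t ht ht₀
  rwa [← Real.rpow_mul ht₀.le, inv_mul_cancel₀ hs.ne', Real.rpow_one] at ht

section WeightedSystem

theorem wnorm_le_iff {k : ℕ} {w : Fin k → ℝ} (hw : ∀ j, 0 < w j) (x : Fin k → ℝ) {r : ℝ}
    (hr : 0 < r) : wnorm w x ≤ r ↔ ∀ j, |x j| ≤ r ^ w j := by
  have hcoord (j : Fin k) : |x j| ^ (1 / w j) ≤ r ↔ |x j| ≤ r ^ w j := by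
    rw [one_div, Real.rpow_inv_le_iff_of_pos (abs_nonneg _) hr.le (hw j)]
  simp only [← hcoord]
  exact ⟨fun h j ↦ (le_ciSup (Finite.bddAbove_range fun j ↦ |x j| ^ (1 / w j)) j).trans h,
    fun h ↦ Real.iSup_le h hr.le⟩

variable {m n k l : ℕ}

/-- The matrix of the linear map `(x, y) ↦ (x, Θx - y)`, whose coordinates are the linear forms
bounded in the Diophantine system of `Θ`. -/
def systemMatrix (Θ : Matrix (Fin n) (Fin m) ℝ) : Matrix (Fin m ⊕ Fin n) (Fin m ⊕ Fin n) ℝ :=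
  fromBlocks 1 0 Θ (-1)

theorem systemMatrix_mul_self (Θ : Matrix (Fin n) (Fin m) ℝ) :
    systemMatrix Θ * systemMatrix Θ = 1 := by
  simp [systemMatrix, fromBlocks_multiply]

theorem systemMatrix_transpose_mul_transpose (Θ : Matrix (Fin n) (Fin m) ℝ) :
    (systemMatrix Θ)ᵀ * (systemMatrix Θ)ᵀ = 1 := by
  rw [← transpose_mul, systemMatrix_mul_self, transpose_one]

variable (Θ : Matrix (Fin n) (Fin m) ℝ) {σ : Fin m → ℝ} {ρ : Fin n → ℝ}
  (hσ : ∀ j, 0 < σ j) (hρ : ∀ i, 0 < ρ i)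
include hσ hρ

theorem solvK_iff_hasIndependent {γ t : ℝ} (ht : 0 < t) :
    solvK Θ σ ρ k γ t ↔
      HasIndependent k (formBox (systemMatrix Θ) fun i ↦ t ^ Sum.elim σ (-γ • ρ) i) := by
  change HasIndependent k {v : (Fin m → ℤ) × (Fin n → ℤ) | wnorm σ (Int.cast ∘ v.1) ≤ t ∧
    wnorm ρ (Θ *ᵥ (Int.cast ∘ v.1) - Int.cast ∘ v.2) ≤ t ^ (-γ)} ↔ _
  rw [← HasIndependent.preimage_iff (LinearEquiv.sumArrowLequivProdArrow _ _ ℤ ℤ)]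
  refine iff_of_eq (congrArg _ (Set.ext fun z ↦ ?_))
  obtain ⟨x, y, rfl⟩ : ∃ x y, z = Sum.elim x y := ⟨_, _, (Sum.elim_comp_inl_inr z).symm⟩
  have hmul : systemMatrix Θ *ᵥ (Int.cast ∘ Sum.elim x y) =
      Sum.elim (Int.cast ∘ x) (Θ *ᵥ (Int.cast ∘ x) - Int.cast ∘ y) := by
    rw [systemMatrix, Sum.comp_elim, fromBlocks_mulVec]
    simp [sub_eq_add_neg, neg_mulVec]
  change (wnorm σ (Int.cast ∘ x) ≤ t ∧ wnorm ρ (Θ *ᵥ (Int.cast ∘ x) - Int.cast ∘ y) ≤ t ^ (-γ)) ↔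
    ∀ i, |(systemMatrix Θ *ᵥ (Int.cast ∘ Sum.elim x y)) i| ≤ _
  rw [hmul, Sum.forall, wnorm_le_iff hσ _ ht, wnorm_le_iff hρ _ (Real.rpow_pos_of_pos ht _)]
  simp only [← Real.rpow_mul ht.le, Sum.elim_inl, Sum.elim_inr, Pi.smul_apply, smul_eq_mul]

theorem solvK_transpose_iff_hasIndependent {δ t : ℝ} (ht : 0 < t) :
    solvK Θᵀ ρ σ l δ t ↔
      HasIndependent l (formBox (systemMatrix Θ)ᵀ fun i ↦ t ^ Sum.elim (-δ • σ) ρ i) := by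
  change HasIndependent l {v : (Fin n → ℤ) × (Fin m → ℤ) | wnorm ρ (Int.cast ∘ v.1) ≤ t ∧
    wnorm σ (Θᵀ *ᵥ (Int.cast ∘ v.1) - Int.cast ∘ v.2) ≤ t ^ (-δ)} ↔ _
  -- The solution attached to `Sum.elim x y` is `(y, -x)`.
  rw [← HasIndependent.preimage_iff (LinearEquiv.sumArrowLequivProdArrow _ _ ℤ ℤ ≪≫ₗ
    LinearEquiv.prodComm ℤ _ _ ≪≫ₗ (LinearEquiv.refl ℤ _).prodCongr (LinearEquiv.neg ℤ))]
  refine iff_of_eq (congrArg _ (Set.ext fun z ↦ ?_))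
  obtain ⟨x, y, rfl⟩ : ∃ x y, z = Sum.elim x y := ⟨_, _, (Sum.elim_comp_inl_inr z).symm⟩
  have hmul : (systemMatrix Θ)ᵀ *ᵥ (Int.cast ∘ Sum.elim x y) =
      Sum.elim (Θᵀ *ᵥ (Int.cast ∘ y) - Int.cast ∘ (-x)) (-(Int.cast ∘ y)) := by
    have hneg : (Int.cast ∘ (-x) : Fin m → ℝ) = -(Int.cast ∘ x) := funext fun j ↦ by simp
    rw [systemMatrix, Sum.comp_elim, fromBlocks_transpose, fromBlocks_mulVec, hneg]
    simp [add_comm, neg_mulVec]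
  change (wnorm ρ (Int.cast ∘ y) ≤ t ∧
    wnorm σ (Θᵀ *ᵥ (Int.cast ∘ y) - Int.cast ∘ (-x)) ≤ t ^ (-δ)) ↔
    ∀ i, |((systemMatrix Θ)ᵀ *ᵥ (Int.cast ∘ Sum.elim x y)) i| ≤ _
  rw [hmul, Sum.forall, wnorm_le_iff hρ _ ht, wnorm_le_iff hσ _ (Real.rpow_pos_of_pos ht _),
    and_comm]
  simp only [← Real.rpow_mul ht.le, Sum.elim_inl, Sum.elim_inr, Pi.smul_apply, smul_eq_mul,
    Pi.neg_apply, abs_neg]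

theorem solvK_transpose_rpow_iff_hasIndependent {δ s t : ℝ} (ht : 0 < t) :
    solvK Θᵀ ρ σ l δ (t ^ s) ↔ HasIndependent l
      (formBox (systemMatrix Θ)ᵀ fun i ↦ t ^ (s • Sum.elim (-δ • σ) ρ) i) := by
  rw [solvK_transpose_iff_hasIndependent Θ hσ hρ (Real.rpow_pos_of_pos ht s)]
  simp only [← Real.rpow_mul ht.le, Pi.smul_apply, smul_eq_mul]

theorem eventually_solvK_of_neg {γ : ℝ} (hγ : γ < 0) (hk : k ≤ m + n) :
    ∀ᶠ t in atTop, solvK Θ σ ρ k γ t := by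
  have hpos : ∀ i, 0 < Sum.elim σ (-γ • ρ) i :=
    Sum.forall.mpr ⟨hσ, fun i ↦ mul_pos (neg_pos.mpr hγ) (hρ i)⟩
  filter_upwards [eventually_hasIndependent_formBox_rpow (systemMatrix Θ) hpos (by simpa using hk),
    eventually_gt_atTop 0] with t ht ht₀
  exact (solvK_iff_hasIndependent Θ hσ hρ ht₀).mpr ht

theorem eventually_not_solvK_and {γ δ s : ℝ} (hγ : s < γ) (hδ : 1 < δ * s) (hkl : m + n < k + l) :
    ∀ᶠ t in atTop, ¬(solvK Θ σ ρ k γ t ∧ solvK Θᵀ ρ σ l δ (t ^ s)) := by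
  have hneg : ∀ i, Sum.elim σ (-γ • ρ) i + (s • Sum.elim (-δ • σ) ρ) i < 0 := by
    refine Sum.forall.mpr ⟨fun j ↦ ?_, fun i ↦ ?_⟩ <;>
      simp only [Pi.smul_apply, Sum.elim_inl, Sum.elim_inr, smul_eq_mul]
    · nlinarith [hσ j]
    · nlinarith [hρ i]
  filter_upwards [eventually_not_hasIndependent_formBox_rpow_and
    (systemMatrix_transpose_mul_transpose Θ) hneg (by simpa using hkl), eventually_gt_atTop 0]
    with t ht ht₀
  rwa [solvK_iff_hasIndependent Θ hσ hρ ht₀, solvK_transpose_rpow_iff_hasIndependent Θ hσ hρ ht₀]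

theorem eventually_solvK_or {γ δ s : ℝ} (hγ : γ < s) (hδ : δ * s < 1) (hk : 1 ≤ k) (hl : 1 ≤ l)
    (hkl : k + l = m + n + 1) :
    ∀ᶠ t in atTop, solvK Θ σ ρ k γ t ∨ solvK Θᵀ ρ σ l δ (t ^ s) := by
  have hpos : ∀ i, 0 < Sum.elim σ (-γ • ρ) i + (s • Sum.elim (-δ • σ) ρ) i := by
    refine Sum.forall.mpr ⟨fun j ↦ ?_, fun i ↦ ?_⟩ <;>
      simp only [Pi.smul_apply, Sum.elim_inl, Sum.elim_inr, smul_eq_mul]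
    · nlinarith [hσ j]
    · nlinarith [hρ i]
  filter_upwards [eventually_hasIndependent_formBox_rpow_or
    (systemMatrix_transpose_mul_transpose Θ) hpos hk hl (by simpa using hkl),
    eventually_gt_atTop 0] with t ht ht₀
  rwa [solvK_iff_hasIndependent Θ hσ hρ ht₀, solvK_transpose_rpow_iff_hasIndependent Θ hσ hρ ht₀]

theorem isReciprocal_omegaK_omegaHatK (hk : 1 ≤ k) (hl : 1 ≤ l) (hkl : k + l = m + n + 1) :
    IsReciprocal (omegaK Θ σ ρ k) (omegaHatK Θᵀ ρ σ l) := by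
  have homega : omegaK Θ σ ρ k = sSup (Real.toEReal '' {γ | ∃ᶠ t in atTop, solvK Θ σ ρ k γ t}) := by
    simp only [omegaK, frequently_atTop']
  have homegaHat : omegaHatK Θᵀ ρ σ l =
      sSup (Real.toEReal '' {δ | ∀ᶠ t in atTop, solvK Θᵀ ρ σ l δ t}) := by
    simp only [omegaHatK, atTop_basis_Ioi.eventually_iff, true_and, Set.mem_Ioi]
  rw [homega, homegaHat]
  refine isReciprocal_sSup_sSup
    (fun γ hγ ↦ (eventually_solvK_of_neg Θ hσ hρ hγ (by lia)).frequently)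
    (fun δ hδ ↦ eventually_solvK_of_neg Θᵀ hρ hσ hδ (by lia)) ?_ ?_
  · intro γ hγS δ hδU hδ
    by_contra! hlt
    obtain ⟨s, hδs, hsγ⟩ := exists_between ((inv_lt_iff_one_lt_mul₀ hδ).mpr hlt)
    have hs : 0 < s := (inv_pos.mpr hδ).trans hδs
    have hδU' := (eventually_atTop_comp_rpow_iff hs).mpr hδU
    have hnot := eventually_not_solvK_and Θ hσ hρ hsγ ((inv_lt_iff_one_lt_mul₀' hδ).mp hδs)
      (k := k) (l := l) (by lia)
    obtain ⟨t, ht, htU, htnot⟩ := (hγS.and_eventually (hδU'.and hnot)).exists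
    exact htnot ⟨ht, htU⟩
  · intro γ δ hγ hδ hlt
    obtain ⟨s, hγs, hsδ⟩ := exists_between ((lt_div_iff₀ hδ).mpr hlt)
    have hs : 0 < s := hγ.trans hγs
    have hor := eventually_solvK_or Θ hσ hρ hγs ((lt_div_iff₀' hδ).mp hsδ) hk hl hkl
    refine or_iff_not_imp_left.mpr fun hγS ↦ (eventually_atTop_comp_rpow_iff hs).mp ?_
    exact hor.mp ((not_frequently.mp hγS).mono fun t hnot hor ↦ hor.resolve_left hnot)

end WeightedSystem

theorem stmt14_general {m n k l : ℕ} (Θ : Matrix (Fin n) (Fin m) ℝ) {σ : Fin m → ℝ}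
    {ρ : Fin n → ℝ} (hσ : ∀ j, 0 < σ j) (hρ : ∀ i, 0 < ρ i) (hk : 1 ≤ k) (hl : 1 ≤ l)
    (hkl : k + l = m + n + 1) :
    IsReciprocal (omegaK Θ σ ρ k) (omegaHatK Θᵀ ρ σ l) ∧
      IsReciprocal (omegaHatK Θ σ ρ k) (omegaK Θᵀ ρ σ l) := by
  refine ⟨isReciprocal_omegaK_omegaHatK Θ hσ hρ hk hl hkl, ?_⟩
  have := isReciprocal_omegaK_omegaHatK Θᵀ hρ hσ hl hk (by lia)
  rw [transpose_transpose] at this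
  exact this.symm

theorem stmt14 {m n : ℕ} (Θ : Matrix (Fin (n + 1)) (Fin (m + 1)) ℝ)
    (σ : Fin (m + 1) → ℝ) (ρ : Fin (n + 1) → ℝ)
    (hσa : Antitone σ) (hρa : Antitone ρ)
    (hσp : ∀ j, 0 < σ j) (hρp : ∀ i, 0 < ρ i)
    (hσs : ∑ j, σ j = 1) (hρs : ∑ i, ρ i = 1)
    (k : ℕ) (hk1 : 1 ≤ k) (hkd : k ≤ m + 1 + (n + 1)) :
    (∀ γ : ℝ, 0 < γ →
      (((γ : EReal) ≤ omegaK Θ σ ρ k ↔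
        omegaHatK Θ.transpose ρ σ (m + 1 + (n + 1) + 1 - k) ≤ ((γ⁻¹ : ℝ) : EReal)) ∧
      ((γ : EReal) ≤ omegaHatK Θ σ ρ k ↔
        omegaK Θ.transpose ρ σ (m + 1 + (n + 1) + 1 - k) ≤ ((γ⁻¹ : ℝ) : EReal)))) ∧
    (∀ a b : ℝ, omegaK Θ σ ρ k = (a : EReal) →
      omegaHatK Θ.transpose ρ σ (m + 1 + (n + 1) + 1 - k) = (b : EReal) → a * b = 1) ∧
    (∀ a b : ℝ, omegaHatK Θ σ ρ k = (a : EReal) →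
      omegaK Θ.transpose ρ σ (m + 1 + (n + 1) + 1 - k) = (b : EReal) → a * b = 1) ∧
    (omegaK Θ σ ρ k = 0 ↔ omegaHatK Θ.transpose ρ σ (m + 1 + (n + 1) + 1 - k) = ⊤) ∧
    (omegaK Θ σ ρ k = ⊤ ↔ omegaHatK Θ.transpose ρ σ (m + 1 + (n + 1) + 1 - k) = 0) ∧
    (omegaHatK Θ σ ρ k = 0 ↔ omegaK Θ.transpose ρ σ (m + 1 + (n + 1) + 1 - k) = ⊤) ∧
    (omegaHatK Θ σ ρ k = ⊤ ↔ omegaK Θ.transpose ρ σ (m + 1 + (n + 1) + 1 - k) = 0) := by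
  obtain ⟨h, h'⟩ :=
    stmt14_general Θ hσp hρp hk1 (l := m + 1 + (n + 1) + 1 - k) (by lia) (by lia)
  exact ⟨fun γ hγ ↦ ⟨h.coe_le_iff hγ, h'.coe_le_iff hγ⟩, fun _ _ ↦ h.mul_eq_one,
    fun _ _ ↦ h'.mul_eq_one, h.eq_zero_iff, h.eq_top_iff, h'.eq_zero_iff, h'.eq_top_iff⟩
end
end

section
/- For every τ ∈ T: (a) for each k = 1,…,d−1 one has |τ|_+^{[k]} = ((d−k)/k)·|−τ|_+^{[d−k]}; (b) for each k = 1,…,d−1 one has (k(d−k−1)/((d−k)(k+1)))·|τ|_+^{[k]} ≤ |τ|_+^{[k+1]} ≤ |τ|_+^{[k]}. -/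
/-!
Let `M k` be the largest sum of a numerical function `f` over a `k`-element index set. Deleting one
index at a time from a `(k + 1)`-element set attaining `M (k + 1)` and averaging gives
`k * M (k + 1) ≤ (k + 1) * M k`. Passing to complements subtracts `∑ i, f i` from each sum and
replaces `f` by `-f`; this duality gives part (a), and it turns the averaging inequality for `-f`
into the lower bound on `M (k + 1)`.
-/

noncomputable section

/-- `|τ|_+^[k]`: the maximum of `(τ_{i₁} + ⋯ + τ_{i_k})/k` over all `k`-element
index subsets `{i₁ < … < i_k} ⊆ {1, …, d}`. -/
def tauPlusK (d k : ℕ) (τ : Fin d → ℝ) : ℝ :=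
  sSup ((fun S : Finset (Fin d) => (∑ i ∈ S, τ i) / (k : ℝ)) '' {S | S.card = k})

open Finset

section SubsetSums

variable {ι M : Type*} [AddCommGroup M]

/-- The sums of `f` over the `k`-element index sets. A largest such sum is `k` times the maximal
average over these sets; sums are used so that `k = 0` needs no separate treatment. -/
def subsetSums (f : ι → M) (k : ℕ) : Set M :=
  (fun S : Finset ι => ∑ i ∈ S, f i) '' {S | #S = k}

theorem nsmul_le_succ_nsmul_of_mem_subsetSums [PartialOrder M] [IsOrderedAddMonoid M]
    {f : ι → M} {k : ℕ} {a b : M} (hb : b ∈ subsetSums f (k + 1))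
    (ha : a ∈ upperBounds (subsetSums f k)) : k • b ≤ (k + 1) • a := by
  classical
  obtain ⟨S, hS : #S = k + 1, rfl⟩ := hb
  calc k • ∑ i ∈ S, f i
      = ∑ i ∈ S, ∑ j ∈ S.erase i, f j := by
        rw [sum_congr rfl fun i hi => sum_erase_eq_sub hi, sum_sub_distrib, sum_const, hS,
          succ_nsmul, add_sub_cancel_right]
    _ ≤ #S • a := sum_le_card_nsmul _ _ _ fun i hi =>
        have hcard : #(S.erase i) = k := by rw [card_erase_of_mem hi, hS, Nat.add_sub_cancel]
        ha ⟨S.erase i, hcard, rfl⟩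
    _ = (k + 1) • a := by rw [hS]

variable [Fintype ι] {f : ι → M} {k l : ℕ}

theorem sub_sum_mem_subsetSums_neg (h : k + l = Fintype.card ι) {x : M}
    (hx : x ∈ subsetSums f k) : x - ∑ i, f i ∈ subsetSums (-f) l := by
  classical
  obtain ⟨S, hS : #S = k, rfl⟩ := hx
  refine ⟨Sᶜ, show #Sᶜ = l by rw [card_compl]; omega, ?_⟩
  simp only [← sum_add_sum_compl S f, Pi.neg_apply, sum_neg_distrib, sub_add_cancel_left]

variable [PartialOrder M] [IsOrderedAddMonoid M]

theorem sub_sum_mem_upperBounds_subsetSums_neg (h : k + l = Fintype.card ι) {a : M}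
    (ha : a ∈ upperBounds (subsetSums f k)) :
    a - ∑ i, f i ∈ upperBounds (subsetSums (-f) l) := by
  intro x hx
  have hx' : x + ∑ i, f i ∈ subsetSums f k := by
    simpa only [neg_neg, Pi.neg_apply, sum_neg_distrib, sub_neg_eq_add] using
      sub_sum_mem_subsetSums_neg (add_comm k l ▸ h) hx
  exact le_sub_iff_add_le.2 (ha hx')

theorem isGreatest_subsetSums_neg (h : k + l = Fintype.card ι) {a : M}
    (ha : IsGreatest (subsetSums f k) a) : IsGreatest (subsetSums (-f) l) (a - ∑ i, f i) :=
  ⟨sub_sum_mem_subsetSums_neg h ha.1, sub_sum_mem_upperBounds_subsetSums_neg h ha.2⟩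

theorem nsmul_sub_sum_le_succ_nsmul_sub_sum (h : k + 1 + l = Fintype.card ι) {a b : M}
    (ha : a ∈ subsetSums f k) (hb : b ∈ upperBounds (subsetSums f (k + 1))) :
    l • (a - ∑ i, f i) ≤ (l + 1) • (b - ∑ i, f i) :=
  nsmul_le_succ_nsmul_of_mem_subsetSums (sub_sum_mem_subsetSums_neg (by omega) ha)
    (sub_sum_mem_upperBounds_subsetSums_neg h hb)

end SubsetSums

section TauPlusK

variable {d k l : ℕ} (τ : Fin d → ℝ)

theorem isGreatest_mul_tauPlusK (hkd : k ≤ d) :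
    IsGreatest (subsetSums τ k) (k * tauPlusK d k τ) := by
  let averages := (fun S : Finset (Fin d) => (∑ i ∈ S, τ i) / (k : ℝ)) '' {S | #S = k}
  have hnonempty : averages.Nonempty := by
    obtain ⟨S, -, hS⟩ := exists_subset_card_eq (s := (univ : Finset (Fin d))) (by simpa using hkd)
    exact ⟨_, S, hS, rfl⟩
  have hmax : IsGreatest averages (tauPlusK d k τ) :=
    ⟨hnonempty.csSup_mem (Set.toFinite _), fun _ => le_csSup (Set.toFinite _).bddAbove⟩
  have hsums : subsetSums τ k = (fun x => (k : ℝ) * x) '' averages := by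
    rw [subsetSums, Set.image_image]
    refine Set.image_congr fun S (hS : #S = k) => (mul_div_cancel_of_imp' fun hk => ?_).symm
    rw [card_eq_zero.1 (hS.trans (by exact_mod_cast hk)), sum_empty]
  rw [hsums]
  exact (monotone_mul_left_of_nonneg k.cast_nonneg).map_isGreatest hmax

theorem mul_tauPlusK_neg (h : k + l = d) :
    l * tauPlusK d l (-τ) = k * tauPlusK d k τ - ∑ i, τ i :=
  (isGreatest_mul_tauPlusK (-τ) (by omega)).unique <|
    isGreatest_subsetSums_neg (by simpa using h) (isGreatest_mul_tauPlusK τ (by omega))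

theorem tauPlusK_succ_le (hk : 1 ≤ k) (hkd : k + 1 ≤ d) :
    tauPlusK d (k + 1) τ ≤ tauPlusK d k τ := by
  have hk_pos : (0 : ℝ) < k := by exact_mod_cast hk
  have haverage := nsmul_le_succ_nsmul_of_mem_subsetSums
    (isGreatest_mul_tauPlusK τ hkd).1
    (isGreatest_mul_tauPlusK τ (by omega)).2
  simp only [nsmul_eq_mul, Nat.cast_add, Nat.cast_one] at haverage
  refine le_of_mul_le_mul_left ?_ (mul_pos hk_pos k.cast_add_one_pos)
  linarith

theorem mul_tauPlusK_sub_sum_le (h : k + 1 + l = d) :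
    l * (k * tauPlusK d k τ - ∑ i, τ i) ≤
      (l + 1) * ((k + 1) * tauPlusK d (k + 1) τ - ∑ i, τ i) := by
  simpa only [nsmul_eq_mul, Nat.cast_add, Nat.cast_one] using
    nsmul_sub_sum_le_succ_nsmul_sub_sum (by simpa using h)
      (isGreatest_mul_tauPlusK τ (by omega)).1
      (isGreatest_mul_tauPlusK τ (by omega)).2

end TauPlusK

theorem stmt16_general (d : ℕ) (τ : Fin d → ℝ) :
    (∀ k : ℕ, 1 ≤ k → k ≤ d - 1 →
      tauPlusK d k τ = (∑ i, τ i) / k + (((d : ℝ) - k) / k) * tauPlusK d (d - k) (-τ)) ∧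
    (∀ k : ℕ, 1 ≤ k → k ≤ d - 1 →
      (∑ i, τ i) / (((d : ℝ) - k) * ((k : ℝ) + 1)) +
          ((k : ℝ) * ((d : ℝ) - k - 1) / (((d : ℝ) - k) * ((k : ℝ) + 1))) * tauPlusK d k τ ≤
        tauPlusK d (k + 1) τ ∧
      tauPlusK d (k + 1) τ ≤ tauPlusK d k τ) := by
  refine ⟨fun k hk hkd => ?_, fun k hk hkd => ⟨?_, tauPlusK_succ_le τ hk (by omega)⟩⟩
  · have hduality := mul_tauPlusK_neg τ (Nat.add_sub_of_le (by omega : k ≤ d))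
    rw [Nat.cast_sub (by omega)] at hduality
    have hk_pos : (0 : ℝ) < k := by exact_mod_cast hk
    rw [div_mul_eq_mul_div, hduality, ← add_div, add_sub_cancel, mul_div_cancel_left₀ _ hk_pos.ne']
  · obtain ⟨l, rfl⟩ : ∃ l, d = k + 1 + l := Nat.exists_eq_add_of_le (by omega)
    have hlower := mul_tauPlusK_sub_sum_le τ rfl
    have hdk : ((k + 1 + l : ℕ) : ℝ) - k = l + 1 := by push_cast; ring
    rw [hdk, div_mul_eq_mul_div, ← add_div, div_le_iff₀ (by positivity)]
    linarith

theorem stmt16 (d : ℕ) (hd : 2 ≤ d) (τ : Fin d → ℝ) (hτ : ∑ i, τ i = 0) :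
    (∀ k : ℕ, 1 ≤ k → k ≤ d - 1 →
      tauPlusK d k τ = (((d : ℝ) - k) / k) * tauPlusK d (d - k) (-τ)) ∧
    (∀ k : ℕ, 1 ≤ k → k ≤ d - 1 →
      ((k : ℝ) * ((d : ℝ) - k - 1) / (((d : ℝ) - k) * ((k : ℝ) + 1))) * tauPlusK d k τ ≤
        tauPlusK d (k + 1) τ ∧
      tauPlusK d (k + 1) τ ≤ tauPlusK d k τ) := by
  simpa only [hτ, zero_div, zero_add] using stmt16_general d τ
end
end

section
/- Let Λ be a unimodular lattice in ℝ^d with dual lattice Λ*, and let f(τ) = |τ|_+ = max_i τ_i. Then ψ̲_1(Λ,f) ≤ ψ̲_1(Λ*,f)/(d−1)². -/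
open Filter

noncomputable section

/-- A unimodular lattice in `ℝ^d`: the set of integer linear combinations of a basis of `ℝ^d`
whose matrix has determinant `±1`. -/
def IsUnimodularLattice (d : ℕ) (Λ : Set (Fin d → ℝ)) : Prop :=
  ∃ B : Matrix (Fin d) (Fin d) ℝ, |B.det| = 1 ∧
    Λ = {v | ∃ x : Fin d → ℤ, v = B.mulVec fun i => (x i : ℝ)}

/-- The dual lattice `Λ* = {w : ⟨w, z⟩ ∈ ℤ for all z ∈ Λ}`. -/
def dualLattice (d : ℕ) (Λ : Set (Fin d → ℝ)) : Set (Fin d → ℝ) :=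
  {w | ∀ z ∈ Λ, ∃ c : ℤ, ∑ i, w i * z i = (c : ℝ)}

/-- The filter on `ℝ^d` of `τ ∈ T` (i.e. `∑ τ_i = 0`) with `|τ| = max_i |τ_i| → ∞`. -/
def Tfilter (d : ℕ) : Filter (Fin d → ℝ) :=
  (Filter.atTop.comap fun τ : Fin d → ℝ => ⨆ i, |τ i|) ⊓
    Filter.principal {τ | ∑ i, τ i = 0}

/-- `ψ̲_k(Λ, f)` for `f(τ) = |τ|_+ = max_i τ_i`: the liminf of `L_k(Λ,τ)/|τ|_+` over
`τ ∈ T` with `|τ| → ∞`. -/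
def psiLowF (d : ℕ) (Λ : Set (Fin d → ℝ)) (k : ℕ) : ℝ :=
  liminf (fun τ : Fin d → ℝ => Lk d Λ τ k / ⨆ i, τ i) (Tfilter d)

/-- `ψ̄_k(Λ, f)` for `f(τ) = |τ|_+ = max_i τ_i`: the limsup of `L_k(Λ,τ)/|τ|_+` over
`τ ∈ T` with `|τ| → ∞`. -/
def psiUpF (d : ℕ) (Λ : Set (Fin d → ℝ)) (k : ℕ) : ℝ :=
  limsup (fun τ : Fin d → ℝ => Lk d Λ τ k / ⨆ i, τ i) (Tfilter d)

/-!
Let `w` be a short vector of `Λ*` and `j` the coordinate in which it is largest relative to the box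
`B_τ`. Minkowski's linear forms theorem (`exists_mem_columnLattice_forall_abs_lt`), applied with
`⟨w, ·⟩` in place of the `j`-th coordinate, gives a nonzero `v ∈ Λ` with `|⟨w, v⟩| < 1` whose other
coordinates are small. By integrality `⟨w, v⟩ = 0`, and this equation bounds `v_j` by the other
coordinates. The outcome is Mahler's transference inequality (`succMin_one_neg_pow_le`)
`λ_1(B_{-τ}, Λ)^(d-1) ≤ (d-1)^(d-1) * det Λ * λ_1(B_τ, Λ*)`,
that is, `(d-1) * L_1(Λ, -τ) ≤ L_1(Λ*, τ) + O(1)`, which accounts for one factor `d - 1`. The other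
one is the price of `|-τ|_+ ≤ (d-1) * |τ|_+` on `T`. That estimate goes in the right direction
because `ψ̲_1(Λ, f) ≤ 0`, again by Minkowski's theorem.
-/

open scoped Matrix

section Lattices

variable {ι : Type*} [Fintype ι]

/-- The lattice spanned over `ℤ` by the columns of `B`, in the form in which `IsUnimodularLattice`
presents a lattice. -/
def columnLattice (B : Matrix ι ι ℝ) : Set (ι → ℝ) :=
  {v | ∃ x : ι → ℤ, v = B.mulVec fun i => (x i : ℝ)}

theorem volume_pi_Ioo_neg {c : ι → ℝ} (hc : ∀ i, 0 ≤ c i) :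
    MeasureTheory.volume (Set.univ.pi fun i => Set.Ioo (-c i) (c i)) =
      .ofReal ((∏ i, c i) * 2 ^ Fintype.card ι) := by
  rw [Real.volume_pi_Ioo, ← ENNReal.ofReal_prod_of_nonneg fun i _ => by linarith [hc i]]
  simp only [sub_neg_eq_add, ← mul_two, Finset.prod_mul_distrib, Finset.prod_const,
    Finset.card_univ]

variable [DecidableEq ι] {B : Matrix ι ι ℝ}

theorem exists_mem_columnLattice_forall_abs_lt (hB : B.det ≠ 0) {c : ι → ℝ} (hc : ∀ i, 0 < c i)
    (h : |B.det| < ∏ i, c i) : ∃ v ∈ columnLattice B, v ≠ 0 ∧ ∀ i, |v i| < c i := by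
  classical
  have hcols : LinearIndependent ℝ B.col :=
    Matrix.linearIndependent_cols_iff_isUnit.2 (B.isUnit_iff_isUnit_det.2 hB.isUnit)
  let b := basisOfPiSpaceOfLinearIndependent hcols
  have hb : ⇑b = B.col := coe_basisOfPiSpaceOfLinearIndependent hcols
  let box : Set (ι → ℝ) := Set.univ.pi fun i => Set.Ioo (-c i) (c i)
  have mem_box {v : ι → ℝ} : v ∈ box ↔ ∀ i, |v i| < c i := by
    simp only [box, Set.mem_univ_pi, Set.mem_Ioo, abs_lt]
  have hvolume : MeasureTheory.volume (ZSpan.fundamentalDomain b)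
      * 2 ^ Module.finrank ℝ (ι → ℝ) < MeasureTheory.volume box := by
    have hcovolume : MeasureTheory.volume (ZSpan.fundamentalDomain b) = .ofReal |B.det| := by
      rw [ZSpan.volume_fundamentalDomain, hb, ← Matrix.det_transpose B]
      rfl
    rw [hcovolume, volume_pi_Ioo_neg fun i => (hc i).le, Module.finrank_fintype_fun_eq_card,
      ENNReal.ofReal_mul' (by positivity), ENNReal.ofReal_pow zero_le_two, ENNReal.ofReal_ofNat]
    gcongr
    · finiteness
    · exact (ENNReal.ofReal_lt_ofReal_iff_of_nonneg (abs_nonneg _)).2 h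
  let L : AddSubgroup (ι → ℝ) := (Submodule.span ℤ (Set.range b)).toAddSubgroup
  have : Countable L := inferInstanceAs (Countable (Submodule.span ℤ (Set.range b)))
  obtain ⟨⟨v, hv⟩, hv0, hvbox⟩ :=
    MeasureTheory.exists_ne_zero_mem_lattice_of_measure_mul_two_pow_lt_measure (L := L)
      (ZSpan.isAddFundamentalDomain b MeasureTheory.volume)
      (fun v hv => mem_box.2 fun i => by simpa using mem_box.1 hv i)
      (convex_pi fun i _ => convex_Ioo _ _) hvolume
  obtain ⟨x, rfl⟩ := (Submodule.mem_span_range_iff_exists_fun ℤ).1 hv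
  refine ⟨_, ⟨x, ?_⟩, fun h0 => hv0 (Subtype.ext h0), mem_box.1 hvbox⟩
  ext i
  simp [hb, Matrix.mulVec, dotProduct, mul_comm]

theorem exists_mem_columnLattice_abs_dotProduct_lt (hB : B.det ≠ 0) {w : ι → ℝ} {j : ι}
    (hwj : w j ≠ 0) {c : ι → ℝ} (hc : ∀ i, 0 < c i) (h : |w j| * |B.det| < ∏ i, c i) :
    ∃ v ∈ columnLattice B, v ≠ 0 ∧ |w ⬝ᵥ v| < c j ∧ ∀ i ≠ j, |v i| < c i := by
  -- The `j`-th coordinate form is traded for `⟨w, ·⟩`, which scales the determinant by `w j`.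
  have hdet : (B.updateRow j (w ᵥ* B)).det = w j * B.det := by
    rw [Matrix.vecMul_eq_sum]
    exact Matrix.det_updateRow_sum B j w
  obtain ⟨_, ⟨x, rfl⟩, hu0, hu⟩ := exists_mem_columnLattice_forall_abs_lt
    (hdet ▸ mul_ne_zero hwj hB) hc (by rwa [hdet, abs_mul])
  rw [Matrix.updateRow_mulVec, ← Matrix.dotProduct_mulVec] at hu0 hu
  refine ⟨_, ⟨x, rfl⟩, fun hv0 => hu0 ?_, by simpa using hu j, fun i hij => ?_⟩
  · rw [hv0, dotProduct_zero, ← Pi.zero_apply (M := fun _ => ℝ) j, Function.update_eq_self]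
  · simpa [hij] using hu i

theorem exists_pos_forall_le_norm_of_mem_columnLattice (hB : B.det ≠ 0) :
    ∃ c > 0, ∀ v ∈ columnLattice B, v ≠ 0 → c ≤ ‖v‖ := by
  have hker : (Matrix.toLin' B).ker = ⊥ := LinearMap.ker_eq_bot.2
    (Matrix.mulVec_injective_iff_isUnit.2 (B.isUnit_iff_isUnit_det.2 hB.isUnit))
  obtain ⟨K, hK, hanti⟩ := (Matrix.toLin' B).exists_antilipschitzWith hker
  refine ⟨(K : ℝ)⁻¹, by positivity, ?_⟩
  rintro _ ⟨x, rfl⟩ hv0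
  obtain ⟨i, hi⟩ : ∃ i, x i ≠ 0 := by
    by_contra! hx
    exact hv0 (by simp [hx, Matrix.mulVec_eq_sum])
  rw [inv_le_iff_one_le_mul₀' (by positivity)]
  calc (1 : ℝ) ≤ |(x i : ℝ)| := by exact_mod_cast Int.one_le_abs hi
    _ ≤ ‖fun i => (x i : ℝ)‖ := norm_le_pi_norm (fun i => (x i : ℝ)) i
    _ ≤ K * ‖B *ᵥ fun i => (x i : ℝ)‖ := hanti.le_mul_norm (map_zero _) _

theorem det_inv_transpose_ne_zero (hB : B.det ≠ 0) : B⁻¹ᵀ.det ≠ 0 := by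
  rw [Matrix.det_transpose]
  exact (B.isUnit_nonsing_inv_det hB.isUnit).ne_zero

end Lattices

section DualLattice

variable {d : ℕ} {B : Matrix (Fin d) (Fin d) ℝ}

theorem mem_dualLattice_columnLattice {w : Fin d → ℝ} :
    w ∈ dualLattice d (columnLattice B) ↔ ∃ y : Fin d → ℤ, w ᵥ* B = fun i => (y i : ℝ) := by
  have pairing (x : Fin d → ℝ) : ∑ i, w i * (B *ᵥ x) i = (w ᵥ* B) ⬝ᵥ x :=
    Matrix.dotProduct_mulVec w B x
  constructor
  · intro hw
    have (i : Fin d) : ∃ c : ℤ, (w ᵥ* B) i = c := by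
      obtain ⟨c, hc⟩ := hw _ ⟨Pi.single i 1, rfl⟩
      refine ⟨c, ?_⟩
      rw [← hc, pairing]
      simp [dotProduct, Pi.single_apply]
    choose y hy using this
    exact ⟨y, funext hy⟩
  · rintro ⟨y, hy⟩ _ ⟨x, rfl⟩
    exact ⟨∑ i, y i * x i, by rw [pairing, hy]; simp [dotProduct]⟩

theorem dualLattice_columnLattice (hB : B.det ≠ 0) :
    dualLattice d (columnLattice B) = columnLattice B⁻¹ᵀ := by
  ext w
  rw [mem_dualLattice_columnLattice]
  refine exists_congr fun y => ?_
  rw [Matrix.mulVec_transpose]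
  constructor <;> rintro h
  · rw [← h, Matrix.vecMul_vecMul, Matrix.mul_nonsing_inv _ hB.isUnit, Matrix.vecMul_one]
  · rw [h, Matrix.vecMul_vecMul, Matrix.nonsing_inv_mul _ hB.isUnit, Matrix.vecMul_one]

end DualLattice

section FirstMinimum

variable {ι : Type*}

/-- The factors `lam > 0` for which the dilated box `lam • B_τ` contains a nonzero vector of `Λ`.
Their infimum is the first minimum `λ_1(B_τ, Λ)`. -/
def boxDilations (Λ : Set (ι → ℝ)) (τ : ι → ℝ) : Set ℝ :=
  {lam | 0 < lam ∧ ∃ v ∈ Λ, v ≠ 0 ∧ ∀ i, |v i| ≤ lam * Real.exp (τ i)}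

theorem succMin_one (d : ℕ) (Λ : Set (Fin d → ℝ)) (τ : Fin d → ℝ) :
    succMin d Λ τ 1 = sInf (boxDilations Λ τ) := by
  unfold succMin
  congr 1
  ext lam
  refine and_congr_right fun _ => ⟨?_, ?_⟩
  · rintro ⟨v, hv, hlin, hbox⟩
    exact ⟨v 0, hv 0, hlin.ne_zero 0, hbox 0⟩
  · rintro ⟨v, hv, hv0, hbox⟩
    exact ⟨fun _ => v, fun _ => hv, .of_subsingleton 0 hv0, fun _ => hbox⟩

theorem bddBelow_boxDilations (Λ : Set (ι → ℝ)) (τ : ι → ℝ) : BddBelow (boxDilations Λ τ) :=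
  ⟨0, fun _ h => h.1.le⟩

theorem mem_boxDilations_of_abs_det_lt_pow [Fintype ι] [DecidableEq ι] {B : Matrix ι ι ℝ}
    (hB : B.det ≠ 0) {τ : ι → ℝ} (hτ : ∑ i, τ i = 0) {lam : ℝ} (hlam : 0 < lam)
    (h : |B.det| < lam ^ Fintype.card ι) : lam ∈ boxDilations (columnLattice B) τ := by
  have hprod : ∏ i, lam * Real.exp (τ i) = lam ^ Fintype.card ι := by
    rw [Finset.prod_mul_distrib, ← Real.exp_sum, hτ, Real.exp_zero, mul_one, Finset.prod_const,
      Finset.card_univ]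
  obtain ⟨v, hv, hv0, hbox⟩ := exists_mem_columnLattice_forall_abs_lt hB
    (c := fun i => lam * Real.exp (τ i)) (fun i => by positivity) (by rwa [hprod])
  exact ⟨hlam, v, hv, hv0, fun i => (hbox i).le⟩

variable {d : ℕ} {B : Matrix (Fin d) (Fin d) ℝ} {τ : Fin d → ℝ}

theorem one_add_abs_det_mem_boxDilations (hd : d ≠ 0) (hB : B.det ≠ 0) (hτ : ∑ i, τ i = 0) :
    1 + |B.det| ∈ boxDilations (columnLattice B) τ := by
  refine mem_boxDilations_of_abs_det_lt_pow hB hτ (by positivity) ?_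
  rw [Fintype.card_fin]
  calc |B.det| < 1 + |B.det| := lt_one_add _
    _ ≤ (1 + |B.det|) ^ d := le_self_pow₀ (le_add_of_nonneg_right (abs_nonneg _)) hd

theorem succMin_one_le_one_add_abs_det (hd : d ≠ 0) (hB : B.det ≠ 0) (hτ : ∑ i, τ i = 0) :
    succMin d (columnLattice B) τ 1 ≤ 1 + |B.det| :=
  succMin_one d _ τ ▸
    csInf_le (bddBelow_boxDilations _ _) (one_add_abs_det_mem_boxDilations hd hB hτ)

theorem exists_pos_forall_mul_exp_neg_iSup_le_succMin_one (hd : d ≠ 0) (hB : B.det ≠ 0) :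
    ∃ c > 0, ∀ τ : Fin d → ℝ, ∑ i, τ i = 0 →
      c * Real.exp (-⨆ i, τ i) ≤ succMin d (columnLattice B) τ 1 := by
  obtain ⟨c, hc, hnorm⟩ := exists_pos_forall_le_norm_of_mem_columnLattice hB
  refine ⟨c, hc, fun τ hτ => ?_⟩
  rw [succMin_one]
  refine le_csInf ⟨_, one_add_abs_det_mem_boxDilations hd hB hτ⟩ ?_
  rintro lam ⟨hlam, v, hv, hv0, hbox⟩
  rw [Real.exp_neg, ← div_eq_mul_inv, div_le_iff₀ (Real.exp_pos _)]
  refine (hnorm v hv hv0).trans ((pi_norm_le_iff_of_nonneg (by positivity)).2 fun i => ?_)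
  refine (hbox i).trans ?_
  gcongr
  exact Finite.le_ciSup τ i

theorem succMin_one_pos_s17 (hd : d ≠ 0) (hB : B.det ≠ 0) (hτ : ∑ i, τ i = 0) :
    0 < succMin d (columnLattice B) τ 1 := by
  obtain ⟨c, hc, hle⟩ := exists_pos_forall_mul_exp_neg_iSup_le_succMin_one hd hB
  exact (by positivity : 0 < c * Real.exp (-⨆ i, τ i)).trans_le (hle τ hτ)

end FirstMinimum

section Transference

theorem prod_update_mul_exp_neg {ι : Type*} [Fintype ι] [DecidableEq ι] {τ : ι → ℝ}
    (hτ : ∑ i, τ i = 0) (ν : ℝ) (j : ι) :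
    ∏ i, Function.update (fun i => ν * Real.exp (-τ i)) j 1 i =
      ν ^ (Fintype.card ι - 1) * Real.exp (τ j) := by
  have hsum : ∑ i ∈ Finset.univ.erase j, -τ i = τ j := by
    rw [Finset.sum_neg_distrib, Finset.sum_erase_eq_sub (Finset.mem_univ j), hτ, zero_sub, neg_neg]
  rw [Finset.prod_update_of_mem (Finset.mem_univ j), one_mul, ← Finset.erase_eq,
    Finset.prod_mul_distrib, ← Real.exp_sum, hsum, Finset.prod_const,
    Finset.card_erase_of_mem (Finset.mem_univ j), Finset.card_univ]

theorem abs_apply_le_of_dotProduct_eq_zero {ι : Type*} [Fintype ι] {w v r : ι → ℝ} {j : ι} {ν : ℝ}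
    (hν : 0 ≤ ν) (hwj : w j ≠ 0) (hmax : ∀ i, |w i| * r i ≤ |w j| * r j)
    (horth : w ⬝ᵥ v = 0) (hv : ∀ i ≠ j, |v i| ≤ ν * r i) :
    |v j| ≤ ((Fintype.card ι : ℝ) - 1) * ν * r j := by
  classical
  have hsolve : w j * v j = -∑ i ∈ Finset.univ.erase j, w i * v i :=
    eq_neg_of_add_eq_zero_left
      ((Finset.add_sum_erase _ (fun i => w i * v i) (Finset.mem_univ j)).trans horth)
  have hterm (i : ι) (hi : i ∈ Finset.univ.erase j) : |w i * v i| ≤ ν * (|w j| * r j) :=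
    calc |w i * v i| = |w i| * |v i| := abs_mul _ _
      _ ≤ |w i| * (ν * r i) := by gcongr; exact hv i (Finset.ne_of_mem_erase hi)
      _ = ν * (|w i| * r i) := by ring
      _ ≤ ν * (|w j| * r j) := mul_le_mul_of_nonneg_left (hmax i) hν
  have hcard : ((Finset.univ.erase j).card : ℝ) = (Fintype.card ι : ℝ) - 1 := by
    rw [Finset.cast_card_erase_of_mem (Finset.mem_univ j), Finset.card_univ]
  refine le_of_mul_le_mul_left ?_ (abs_pos.2 hwj)
  calc |w j| * |v j| = |∑ i ∈ Finset.univ.erase j, w i * v i| := by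
        rw [← abs_mul, hsolve, abs_neg]
    _ ≤ ∑ i ∈ Finset.univ.erase j, |w i * v i| := Finset.abs_sum_le_sum_abs _ _
    _ ≤ (Finset.univ.erase j).card • (ν * (|w j| * r j)) := Finset.sum_le_card_nsmul _ _ _ hterm
    _ = |w j| * (((Fintype.card ι : ℝ) - 1) * ν * r j) := by rw [nsmul_eq_mul, hcard]; ring

variable {d : ℕ} {B : Matrix (Fin d) (Fin d) ℝ} {τ : Fin d → ℝ}

theorem mul_mem_boxDilations_neg (hd : 2 ≤ d) (hB : B.det ≠ 0) (hτ : ∑ i, τ i = 0) {lam ν : ℝ}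
    (hν : 0 < ν) (hlam : lam ∈ boxDilations (dualLattice d (columnLattice B)) τ)
    (hlt : |B.det| * lam < ν ^ (d - 1)) :
    ((d : ℝ) - 1) * ν ∈ boxDilations (columnLattice B) (-τ) := by
  have hd1 : (1 : ℝ) ≤ d - 1 := by linarith [(Nat.ofNat_le_cast (α := ℝ)).2 hd]
  have : Nonempty (Fin d) := ⟨0, by lia⟩
  obtain ⟨-, w, hw, hw0, hwbox⟩ := hlam
  obtain ⟨j, hmax⟩ := Finite.exists_max fun i => |w i| * Real.exp (-τ i)
  have hwj : w j ≠ 0 := by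
    rintro hj
    refine hw0 (funext fun i => abs_nonpos_iff.1 ?_)
    exact nonpos_of_mul_nonpos_left (by simpa [hj] using hmax i) (Real.exp_pos _)
  let c := Function.update (fun i => ν * Real.exp (-τ i)) j 1
  have hc (i : Fin d) : 0 < c i := by
    rcases eq_or_ne i j with rfl | hij
    · simp [c]
    · simpa [c, hij] using by positivity
  obtain ⟨v, hv, hv0, hwv, hvbox⟩ := exists_mem_columnLattice_abs_dotProduct_lt hB hwj hc <|
    calc |w j| * |B.det| ≤ lam * Real.exp (τ j) * |B.det| := by gcongr; exact hwbox j
      _ = |B.det| * lam * Real.exp (τ j) := by ring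
      _ < ν ^ (d - 1) * Real.exp (τ j) := by gcongr
      _ = ∏ i, c i := by rw [prod_update_mul_exp_neg hτ, Fintype.card_fin]
  have horth : w ⬝ᵥ v = 0 := by
    obtain ⟨m, hm : w ⬝ᵥ v = m⟩ := hw v hv
    have hm1 : |m| < 1 := by exact_mod_cast (by simpa [c, hm] using hwv : |(m : ℝ)| < 1)
    rw [hm, Int.abs_lt_one_iff.1 hm1, Int.cast_zero]
  have hvbox' (i : Fin d) (hij : i ≠ j) : |v i| ≤ ν * Real.exp (-τ i) := by
    simpa [c, hij] using (hvbox i hij).le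
  refine ⟨by positivity, v, hv, hv0, fun i => ?_⟩
  rcases eq_or_ne i j with rfl | hij
  · simpa using abs_apply_le_of_dotProduct_eq_zero hν.le hwj hmax horth hvbox'
  · exact (hvbox' i hij).trans <|
      mul_le_mul_of_nonneg_right (le_mul_of_one_le_left hν.le hd1) (Real.exp_nonneg _)

theorem succMin_one_neg_pow_le (hd : 2 ≤ d) (hB : B.det ≠ 0) (hτ : ∑ i, τ i = 0) :
    succMin d (columnLattice B) (-τ) 1 ^ (d - 1) ≤
      ((d : ℝ) - 1) ^ (d - 1) * (|B.det| * succMin d (dualLattice d (columnLattice B)) τ 1) := by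
  have hd1 : (0 : ℝ) < d - 1 := sub_pos.2 (Nat.one_lt_cast.2 hd)
  have hdet : 0 < |B.det| := abs_pos.2 hB
  by_contra! hlt
  obtain ⟨q, hq, hlt_q, hq_lt⟩ := exists_pow_btwn (by lia : d - 1 ≠ 0) hlt
    (pow_pos (succMin_one_pos_s17 (by lia) hB (by simp [hτ])) _)
  obtain ⟨lam, hlam, hlam_lt⟩ : ∃ lam ∈ boxDilations (dualLattice d (columnLattice B)) τ,
      lam < (q / (d - 1)) ^ (d - 1) / |B.det| := by
    apply exists_lt_of_csInf_lt
    · rw [dualLattice_columnLattice hB]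
      exact ⟨_, one_add_abs_det_mem_boxDilations (by lia) (det_inv_transpose_ne_zero hB) hτ⟩
    · rwa [← succMin_one, lt_div_iff₀' hdet, div_pow, lt_div_iff₀' (by positivity)]
  rw [lt_div_iff₀' hdet] at hlam_lt
  have hmem := mul_mem_boxDilations_neg hd hB hτ (by positivity) hlam hlam_lt
  rw [mul_div_cancel₀ _ hd1.ne'] at hmem
  have hle : succMin d (columnLattice B) (-τ) 1 ≤ q :=
    succMin_one d _ (-τ) ▸ csInf_le (bddBelow_boxDilations _ _) hmem
  exact (lt_of_pow_lt_pow_left₀ _ (succMin_one_pos_s17 (by lia) hB (by simp [hτ])).le hq_lt).not_ge hle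

theorem Lk_one_neg_le (hd : 2 ≤ d) (hB : B.det ≠ 0) (hτ : ∑ i, τ i = 0) :
    ((d : ℝ) - 1) * Lk d (columnLattice B) (-τ) 1 ≤
      ((d : ℝ) - 1) * Real.log (d - 1) + Real.log |B.det| +
        Lk d (dualLattice d (columnLattice B)) τ 1 := by
  have hd1 : (0 : ℝ) < d - 1 := sub_pos.2 (Nat.one_lt_cast.2 hd)
  have hcast : ((d - 1 : ℕ) : ℝ) = d - 1 := Nat.cast_pred (by lia)
  have hpos : 0 < succMin d (columnLattice B) (-τ) 1 :=
    succMin_one_pos_s17 (by lia) hB (by simp [hτ])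
  have hdual_pos : 0 < succMin d (dualLattice d (columnLattice B)) τ 1 := by
    rw [dualLattice_columnLattice hB]
    exact succMin_one_pos_s17 (by lia) (det_inv_transpose_ne_zero hB) hτ
  have hlog := Real.log_le_log (by positivity) (succMin_one_neg_pow_le hd hB hτ)
  rw [Real.log_pow, Real.log_mul (by positivity) (by positivity), Real.log_pow,
    Real.log_mul (by positivity) hdual_pos.ne', hcast, ← add_assoc] at hlog
  exact hlog

end Transference

section SumZero

variable {ι : Type*} [Fintype ι] {τ : ι → ℝ}

theorem neg_apply_le_mul_iSup (hτ : ∑ i, τ i = 0) (j : ι) :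
    -τ j ≤ ((Fintype.card ι : ℝ) - 1) * ⨆ i, τ i := by
  classical
  have hcard : ((Finset.univ.erase j).card : ℝ) = (Fintype.card ι : ℝ) - 1 := by
    rw [Finset.cast_card_erase_of_mem (Finset.mem_univ j), Finset.card_univ]
  calc -τ j = ∑ i ∈ Finset.univ.erase j, τ i := by
        rw [Finset.sum_erase_eq_sub (Finset.mem_univ j), hτ, zero_sub]
    _ ≤ (Finset.univ.erase j).card • ⨆ i, τ i :=
        Finset.sum_le_card_nsmul _ _ _ fun i _ => Finite.le_ciSup τ i
    _ = ((Fintype.card ι : ℝ) - 1) * ⨆ i, τ i := by rw [nsmul_eq_mul, hcard]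

theorem iSup_neg_le_mul_iSup [Nonempty ι] (hτ : ∑ i, τ i = 0) :
    ⨆ i, (-τ) i ≤ ((Fintype.card ι : ℝ) - 1) * ⨆ i, τ i :=
  ciSup_le (neg_apply_le_mul_iSup hτ)

theorem iSup_abs_le_mul_iSup [Nontrivial ι] (hτ : ∑ i, τ i = 0) :
    ⨆ i, |τ i| ≤ ((Fintype.card ι : ℝ) - 1) * ⨆ i, τ i := by
  have hcard : (1 : ℝ) ≤ (Fintype.card ι : ℝ) - 1 := by
    linarith [(Nat.ofNat_le_cast (α := ℝ)).2 (Fintype.one_lt_card (α := ι))]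
  obtain ⟨k, -, hk⟩ : ∃ k ∈ Finset.univ, 0 ≤ τ k :=
    Finset.exists_le_of_sum_le Finset.univ_nonempty (by simp [hτ])
  have hsup : 0 ≤ ⨆ i, τ i := hk.trans (Finite.le_ciSup τ k)
  refine ciSup_le fun i => abs_le'.2 ⟨?_, neg_apply_le_mul_iSup hτ i⟩
  exact (Finite.le_ciSup τ i).trans (le_mul_of_one_le_left hsup hcard)

end SumZero

section Tfilter

variable {d : ℕ}

theorem eventually_sum_eq_zero_Tfilter (d : ℕ) : ∀ᶠ τ in Tfilter d, ∑ i, τ i = 0 :=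
  mem_inf_of_right (mem_principal_self _)

theorem tendsto_iSup_abs_Tfilter (d : ℕ) :
    Tendsto (fun τ : Fin d → ℝ => ⨆ i, |τ i|) (Tfilter d) atTop :=
  tendsto_comap.mono_left inf_le_left

theorem tendsto_iSup_Tfilter (hd : 2 ≤ d) :
    Tendsto (fun τ : Fin d → ℝ => ⨆ i, τ i) (Tfilter d) atTop := by
  have : Nontrivial (Fin d) := Fin.nontrivial_iff_two_le.2 hd
  have hd1 : (0 : ℝ) < d - 1 := sub_pos.2 (Nat.one_lt_cast.2 hd)
  refine (tendsto_const_mul_atTop_of_pos hd1).1 ?_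
  refine tendsto_atTop_mono' _ ?_ (tendsto_iSup_abs_Tfilter d)
  filter_upwards [eventually_sum_eq_zero_Tfilter d] with τ hτ
  simpa using iSup_abs_le_mul_iSup hτ

theorem tendsto_neg_Tfilter (d : ℕ) :
    Tendsto (fun τ : Fin d → ℝ => -τ) (Tfilter d) (Tfilter d) := by
  refine tendsto_inf.2 ⟨tendsto_comap_iff.2 ?_, tendsto_principal.2 ?_⟩
  · simpa [Function.comp_def] using tendsto_iSup_abs_Tfilter d
  · filter_upwards [eventually_sum_eq_zero_Tfilter d] with τ hτ
    simp [hτ]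

theorem Tfilter_neBot (hd : 2 ≤ d) : (Tfilter d).NeBot := by
  have : Nontrivial (Fin d) := Fin.nontrivial_iff_two_le.2 hd
  obtain ⟨j, k, hjk⟩ := exists_pair_ne (Fin d)
  let ray (t : ℝ) : Fin d → ℝ := Pi.single j t - Pi.single k t
  have htendsto : Tendsto ray atTop (Tfilter d) := by
    refine tendsto_inf.2 ⟨tendsto_comap_iff.2 ?_, tendsto_principal.2 (.of_forall fun t => ?_)⟩
    · refine tendsto_atTop_mono (fun t => ?_) tendsto_id
      calc t = ray t j := by simp [ray, hjk]
        _ ≤ |ray t j| := le_abs_self _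
        _ ≤ ⨆ i, |ray t i| := Finite.le_ciSup (fun i => |ray t i|) j
    · simp [ray]
  exact htendsto.neBot

end Tfilter

section Exponents

variable {d : ℕ} {B : Matrix (Fin d) (Fin d) ℝ}

theorem eventually_Lk_one_div_iSup_le (hd : 2 ≤ d) (hB : B.det ≠ 0) {ε : ℝ} (hε : 0 < ε) :
    ∀ᶠ τ in Tfilter d, Lk d (columnLattice B) τ 1 / ⨆ i, τ i ≤ ε := by
  filter_upwards [eventually_sum_eq_zero_Tfilter d, (tendsto_iSup_Tfilter hd).eventually_gt_atTop 0,
    ((tendsto_iSup_Tfilter hd).const_div_atTop (Real.log (1 + |B.det|))).eventually_le_const hε]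
    with τ hτ hsup hsmall
  refine le_trans ?_ hsmall
  gcongr
  exact Real.log_le_log (succMin_one_pos_s17 (by lia) hB hτ)
    (succMin_one_le_one_add_abs_det (by lia) hB hτ)

theorem isBoundedUnder_ge_Lk_one_div_iSup (hd : 2 ≤ d) (hB : B.det ≠ 0) :
    IsBoundedUnder (· ≥ ·) (Tfilter d) fun τ => Lk d (columnLattice B) τ 1 / ⨆ i, τ i := by
  obtain ⟨c, hc, hlower⟩ :=
    exists_pos_forall_mul_exp_neg_iSup_le_succMin_one (by lia : d ≠ 0) hB
  refine isBoundedUnder_of_eventually_ge (a := -2) ?_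
  filter_upwards [eventually_sum_eq_zero_Tfilter d, (tendsto_iSup_Tfilter hd).eventually_gt_atTop 0,
    (tendsto_iSup_Tfilter hd).eventually_ge_atTop (-Real.log c)] with τ hτ hsup hlog_c
  have hlog : Real.log c - ⨆ i, τ i ≤ Lk d (columnLattice B) τ 1 := by
    rw [sub_eq_add_neg, ← Real.log_exp (-⨆ i, τ i), ← Real.log_mul hc.ne' (Real.exp_ne_zero _)]
    exact Real.log_le_log (by positivity) (hlower τ hτ)
  rw [le_div_iff₀ hsup]
  linarith

theorem psiLowF_one_nonpos (hd : 2 ≤ d) (hB : B.det ≠ 0) :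
    psiLowF d (columnLattice B) 1 ≤ 0 := by
  have := Tfilter_neBot hd
  exact le_of_forall_pos_le_add fun ε hε => (zero_add ε).symm ▸ liminf_le_of_frequently_le
    (eventually_Lk_one_div_iSup_le hd hB hε).frequently (isBoundedUnder_ge_Lk_one_div_iSup hd hB)

theorem mul_iSup_le_Lk_one_dual (hd : 2 ≤ d) (hB : B.det ≠ 0) {τ : Fin d → ℝ}
    (hτ : ∑ i, τ i = 0) {a : ℝ} (ha : a ≤ 0)
    (hneg : a * ⨆ i, (-τ) i ≤ Lk d (columnLattice B) (-τ) 1) :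
    a * ((d : ℝ) - 1) ^ 2 * (⨆ i, τ i) - (((d : ℝ) - 1) * Real.log (d - 1) + Real.log |B.det|) ≤
      Lk d (dualLattice d (columnLattice B)) τ 1 := by
  have : Nonempty (Fin d) := ⟨0, by lia⟩
  have hd1 : (0 : ℝ) ≤ d - 1 := (sub_pos.2 (Nat.one_lt_cast.2 hd)).le
  have hsup : ⨆ i, (-τ) i ≤ ((d : ℝ) - 1) * ⨆ i, τ i := by
    simpa using iSup_neg_le_mul_iSup hτ
  have htransfer : a * ((d : ℝ) - 1) ^ 2 * ⨆ i, τ i ≤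
      ((d : ℝ) - 1) * Lk d (columnLattice B) (-τ) 1 :=
    calc a * ((d : ℝ) - 1) ^ 2 * ⨆ i, τ i = (d - 1) * (a * ((d - 1) * ⨆ i, τ i)) := by ring
      _ ≤ (d - 1) * (a * ⨆ i, (-τ) i) :=
        mul_le_mul_of_nonneg_left (mul_le_mul_of_nonpos_left hsup ha) hd1
      _ ≤ (d - 1) * Lk d (columnLattice B) (-τ) 1 := mul_le_mul_of_nonneg_left hneg hd1
  linarith [Lk_one_neg_le hd hB hτ]

theorem eventually_le_Lk_one_dual_div_iSup (hd : 2 ≤ d) (hB : B.det ≠ 0) {a b : ℝ}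
    (ha : a < psiLowF d (columnLattice B) 1) (hb : b < a * ((d : ℝ) - 1) ^ 2) :
    ∀ᶠ τ in Tfilter d, b ≤ Lk d (dualLattice d (columnLattice B)) τ 1 / ⨆ i, τ i := by
  have ha0 : a ≤ 0 := ha.le.trans (psiLowF_one_nonpos hd hB)
  have hlower : ∀ᶠ τ in Tfilter d, a < Lk d (columnLattice B) (-τ) 1 / ⨆ i, (-τ) i :=
    (tendsto_neg_Tfilter d).eventually <|
      eventually_lt_of_lt_liminf ha (isBoundedUnder_ge_Lk_one_div_iSup hd hB)
  have hsup := tendsto_iSup_Tfilter hd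
  filter_upwards [hlower, eventually_sum_eq_zero_Tfilter d, hsup.eventually_gt_atTop 0,
    (hsup.comp (tendsto_neg_Tfilter d)).eventually_gt_atTop 0,
    (hsup.const_div_atTop (((d : ℝ) - 1) * Real.log (d - 1) + Real.log |B.det|)).eventually_le_const
      (sub_pos.2 hb)] with τ hneg hτ hpos hneg_pos hsmall
  have hdual := mul_iSup_le_Lk_one_dual hd hB hτ ha0 ((lt_div_iff₀ hneg_pos).1 hneg).le
  rw [div_le_iff₀ hpos] at hsmall
  rw [le_div_iff₀ hpos]
  linarith

theorem stmt17_general (hd : 2 ≤ d) (hB : B.det ≠ 0) :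
    psiLowF d (columnLattice B) 1 ≤
      psiLowF d (dualLattice d (columnLattice B)) 1 / ((d : ℝ) - 1) ^ 2 := by
  have := Tfilter_neBot hd
  have hd1 : (0 : ℝ) < d - 1 := sub_pos.2 (Nat.one_lt_cast.2 hd)
  have hdual_bounded : IsBoundedUnder (· ≤ ·) (Tfilter d) fun τ =>
      Lk d (dualLattice d (columnLattice B)) τ 1 / ⨆ i, τ i := by
    rw [dualLattice_columnLattice hB]
    exact isBoundedUnder_of_eventually_le
      (eventually_Lk_one_div_iSup_le hd (det_inv_transpose_ne_zero hB) one_pos)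
  refine le_of_forall_lt_imp_le_of_dense fun a ha => ?_
  rw [le_div_iff₀ (by positivity)]
  refine le_of_forall_lt_imp_le_of_dense fun b hb => ?_
  exact le_liminf_of_le hdual_bounded.isCoboundedUnder_ge
    (eventually_le_Lk_one_dual_div_iSup hd hB ha hb)

end Exponents

theorem stmt17 (d : ℕ) (hd : 2 ≤ d) (Λ : Set (Fin d → ℝ))
    (hΛ : IsUnimodularLattice d Λ) :
    psiLowF d Λ 1 ≤ psiLowF d (dualLattice d Λ) 1 / ((d : ℝ) - 1) ^ 2 := by
  obtain ⟨B, hB, rfl⟩ := hΛ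
  exact stmt17_general hd (abs_pos.1 (hB ▸ one_pos))
end
end
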